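/- Let φ have bounded total oscillations on Σ^β and let ν be an equilibrium measure for φ. For every ε > 0 there exists N_{ε,φ} such that for all m ≥ N_{ε,φ}, every ū ∈ L^β_m, and every y ∈ Σ^β with y_1⋯y_m = ū: ν({x ∈ Σ^β : x_1⋯x_m = ū}) ≤ K⁺ · exp(∑_{j=1}^{m} φ(T^j y) − m·p(φ)), where K⁺ := (z^β(c_1)+2)·e^{3‖φ‖_δ}·e^{5mε} and c_1 is the one-letter word consisting of the first letter of c^β. -/

import Mathlib

/-!
Let `[u]` be the cylinder of a word `u` of length `m`. For the potential `ψ = φ + t 1_[u]` with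
`t > 0`, the equilibrium property gives `t ν[u] ≤ p(ψ) - p(φ)`. By the Gibbs–Bogoliubov inequality
(`log_sum_le`) the right side is at most `t` times the limiting frequency of `u` in the finite
volume Gibbs measures of `ψ` with zero boundary condition, so it suffices to bound the
probability, in such a measure, of seeing `u` in a given window (`occupation`, `nu_le`).

That probability is controlled by replacement (`one_point`): in a configuration showing `u` in the
window, `u` is exchanged for every admissible word of length `m`. To remain in `Σ^β` one lowers the
last nonzero letter before the start of the window, and the last nonzero letter of the new word,
whenever a suffix ending there is a prefix of `c^β` (`HatRel`); afterwards no such suffix is left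
and anything in `Σ^β` may follow (`glue_mem`). The lowering is at most `R + 2` to one (`hat_card`),
where `c_{R+1}` is a nonzero digit of `c^β` with `R ≥ 1`. The energy cost is
`2 ∑ d + 3 bdry d m`, where `d_q` are the single-site oscillations of an extension of `φ` and
`bdry d m = ∑_q d_q min(|q|, m) = o(m)`; the cost caused by `t 1_[u]` is at most `1` for small `t`.
Summing over the new words gives the probability bound
`(R+2)^2 exp(∑_j φ(T^j y) + 2 ∑ d + 3 bdry d m + 1) / Z_m`, with `Z_m` the partition function of a
window of length `m`.

Finally `Z_m ≥ exp(m p(φ) - bdry d m)` (`exists_pressure`): the partition functions with suprema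
over the boundary conditions are submultiplicative, so Fekete's lemma applies; it also shows that
the pressure of `ψ` exists. All factors other than `exp(∑_j φ(T^j y) - m p(φ))` are subexponential
in `m` and are absorbed in `exp(5 m ε)`, the prefactor `(z^β(c_1) + 2) exp(3 ‖φ‖_δ)` being at
least `1`.
-/

open MeasureTheory Filter
open scoped ENNReal

noncomputable section

/-- Remainders of the β-expansion algorithm: `betaR β i = r_i`. -/
def betaR (β : ℝ) : ℕ → ℝ
  | 0 => 1
  | i + 1 => β * betaR β i - ((⌈β * betaR β i⌉ : ℝ) - 1)

/-- Digits of the β-expansion of 1: `betaC β i = c_{i+1}` (0-indexed). -/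
def betaC (β : ℝ) (i : ℕ) : ℕ := (⌈β * betaR β i⌉ - 1).toNat

/-- Lexicographic order on one-sided sequences: `x ⪯ y`. -/
def lexLe (x y : ℕ → ℕ) : Prop :=
  x = y ∨ ∃ i, (∀ j, j < i → x j = y j) ∧ x i < y i

/-- The one-sided β-shift `X^β`. -/
def betaX (β : ℝ) : Set (ℕ → ℕ) :=
  {x | (∀ i, (x i : ℤ) < ⌈β⌉) ∧ ∀ k : ℕ, lexLe (fun i => x (k + i)) (betaC β)}

/-- The language `L^β`: finite words occurring in elements of `X^β`. -/
def betaLang (β : ℝ) : Set (List ℕ) :=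
  {w | ∃ x ∈ betaX β, ∃ k : ℕ, ∀ i, i < w.length → w.getD i 0 = x (k + i)}

/-- The set `P^β` of (finite) prefixes of `c^β`, including the empty word. -/
def betaPref (β : ℝ) : Set (List ℕ) :=
  {u | ∀ i, i < u.length → u.getD i 0 = betaC β i}

/-- The length of the longest suffix of `w` belonging to `P^β`. -/
def sLen (β : ℝ) (w : List ℕ) : ℕ :=
  sSup {ℓ | ℓ ≤ w.length ∧ w.drop (w.length - ℓ) ∈ betaPref β}

/-- `s(w)`: the longest suffix of `w` belonging to `P^β`. -/
def sfx (β : ℝ) (w : List ℕ) : List ℕ := w.drop (w.length - sLen β w)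

/-- The word `v` in the decomposition `w = v · s(w)`. -/
def vprefix (β : ℝ) (w : List ℕ) : List ℕ := w.take (w.length - sLen β w)

/-- Index of the last nonzero letter of a word. -/
def lastNonzeroIdx (u : List ℕ) : ℕ := sSup {j | j < u.length ∧ u.getD j 0 ≠ 0}

/-- The hat operation on a prefix of `c^β`: decrease the last nonzero letter by 1. -/
def hatPrefix (u : List ℕ) : List ℕ :=
  u.set (lastNonzeroIdx u) (u.getD (lastNonzeroIdx u) 0 - 1)

/-- The hat map `w ↦ ŵ` on words: `ŵ = v · (s(w))^`. -/
def hatW (β : ℝ) (w : List ℕ) : List ℕ := vprefix β w ++ hatPrefix (sfx β w)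

/-- `z^β(u)` for `u ∈ P^β`: the number of zero digits of `c^β` following the prefix `u`. -/
def zPref (β : ℝ) (u : List ℕ) : ℕ :=
  if u = [] then 0 else sInf {p | betaC β (u.length + p) ≠ 0}

/-- `z^β(w) = z^β(s(w))` for an arbitrary word. -/
def zW (β : ℝ) (w : List ℕ) : ℕ := zPref β (sfx β w)

/-- `z̄^β(n)`: the maximum of `z^β(u)` over prefixes `u` of `c^β` with `|u| ≤ n`. -/
def zbar (β : ℝ) (n : ℕ) : ℕ :=
  Finset.sup (Finset.range (n + 1)) (fun k => zPref β ((List.range k).map (betaC β)))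

/-- The natural extension `Σ^β` (two-sided β-shift). -/
def betaSigma (β : ℝ) : Set (ℤ → ℕ) :=
  {x | ∀ k : ℤ, (fun i : ℕ => x (k + i)) ∈ betaX β}

/-- The left shift `T^j` on two-sided sequences. -/
def shiftZ (j : ℤ) (x : ℤ → ℕ) : ℤ → ℕ := fun i => x (i + j)

/-- Alphabet size `b = ⌈β⌉`. -/
def bA (β : ℝ) : ℕ := (⌈β⌉).toNat

/-- The full shift `A^ℤ` over the alphabet `{0, …, b-1}`. -/
def fullShift (b : ℕ) : Set (ℤ → ℕ) := {x | ∀ i, x i < b}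

/-- Oscillation `δ_i(g)` of a function on the full shift at site `i`. -/
def deltaOsc (b : ℕ) (g : (ℤ → ℕ) → ℝ) (i : ℤ) : ℝ≥0∞ :=
  sSup {d | ∃ x ∈ fullShift b, ∃ y ∈ fullShift b,
    (∀ k : ℤ, k ≠ i → x k = y k) ∧ d = ENNReal.ofReal |g x - g y|}

/-- `‖g‖_δ = ∑_{i ∈ ℤ} δ_i(g)` for a function on the full shift. -/
def normDeltaBar (b : ℕ) (g : (ℤ → ℕ) → ℝ) : ℝ≥0∞ := ∑' i : ℤ, deltaOsc b g i

/-- `‖φ‖_δ` for a function on `Σ^β`: infimum over continuous extensions to the full shift. -/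
def normDelta (β : ℝ) (φ : (ℤ → ℕ) → ℝ) : ℝ≥0∞ :=
  ⨅ g : {g : (ℤ → ℕ) → ℝ // ContinuousOn g (fullShift (bA β)) ∧
    Set.EqOn g φ (betaSigma β)}, normDeltaBar (bA β) g.val

/-- The word read in the window `[-n, n]` of a two-sided configuration. -/
def wordOf (n : ℕ) (x : ℤ → ℕ) : List ℕ :=
  (List.range (2 * n + 1)).map (fun i => x (-(n : ℤ) + i))

/-- `L^β_m`: words of the language of length `m`. -/
def betaLangN (β : ℝ) (m : ℕ) : Set (List ℕ) := {w | w ∈ betaLang β ∧ w.length = m}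

/-- The defining properties of the set `E^n ⊆ Σ^β`. -/
def IsEn (β : ℝ) (n : ℕ) (E : Finset (ℤ → ℕ)) : Prop :=
  (∀ x ∈ E, x ∈ betaSigma β) ∧
  (∀ x ∈ E, ∀ j : ℤ, (n : ℤ) < |j| → x j = 0) ∧
  Set.BijOn (wordOf n) E (betaLangN β (2 * n + 1))

/-- Birkhoff sum `∑_{j=-n}^n φ(T^j x)`. -/
def birkhoff (φ : (ℤ → ℕ) → ℝ) (n : ℕ) (x : ℤ → ℕ) : ℝ :=
  ∑ j ∈ Finset.Icc (-(n : ℤ)) (n : ℤ), φ (shiftZ j x)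

/-- Partition function `Ξ^n(φ)`. -/
def XiAll (φ : (ℤ → ℕ) → ℝ) (n : ℕ) (E : Finset (ℤ → ℕ)) : ℝ :=
  ∑ x ∈ E, Real.exp (birkhoff φ n x)

/-- `x` matches the word `v` on the window starting at `k`. -/
def matchesAt (x : ℤ → ℕ) (k : ℤ) (v : List ℕ) : Prop :=
  ∀ i : ℕ, i < v.length → x (k + i) = v.getD i 0

/-- `s(x^-_k) = ε`: no nonempty suffix of `(…, x_{k-2}, x_{k-1})` is a prefix of `c^β`. -/
def leftFree (β : ℝ) (x : ℤ → ℕ) (k : ℤ) : Prop :=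
  ∀ ℓ : ℕ, 1 ≤ ℓ → ((List.range ℓ).map (fun i => x (k - ℓ + i))) ∉ betaPref β

open Classical in
/-- Restricted partition function `Ξ^n_{[k,ℓ]}(v)` (with `ℓ = k + |v| - 1`). -/
def XiV (φ : (ℤ → ℕ) → ℝ) (n : ℕ) (E : Finset (ℤ → ℕ)) (k : ℤ) (v : List ℕ) : ℝ :=
  ∑ x ∈ E, if matchesAt x k v then Real.exp (birkhoff φ n x) else 0

open Classical in
/-- Restricted partition function `Ξ^{*,n}_{[k,ℓ]}(v)`: additionally `s(x^-_k) = ε`. -/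
def XiStarV (β : ℝ) (φ : (ℤ → ℕ) → ℝ) (n : ℕ) (E : Finset (ℤ → ℕ)) (k : ℤ)
    (v : List ℕ) : ℝ :=
  ∑ x ∈ E, if matchesAt x k v ∧ leftFree β x k then Real.exp (birkhoff φ n x) else 0

/-- The sequence `(2n+1)^{-1} ln Ξ^n(φ)` whose limit is the pressure. -/
def pressureSeq (φ : (ℤ → ℕ) → ℝ) (E : ℕ → Finset (ℤ → ℕ)) (n : ℕ) : ℝ :=
  (2 * (n : ℝ) + 1)⁻¹ * Real.log (XiAll φ n (E n))

/-- The pressure `p(φ)` (limit of `pressureSeq`). -/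
def pressureLim (φ : (ℤ → ℕ) → ℝ) (E : ℕ → Finset (ℤ → ℕ)) : ℝ :=
  limUnder atTop (pressureSeq φ E)

/-- The left shift on `Σ^β`. -/
def shiftSigma (β : ℝ) (x : ↥(betaSigma β)) : ↥(betaSigma β) :=
  ⟨shiftZ 1 x.val, by
    intro k
    have h := x.prop (k + 1)
    have he : (fun i : ℕ => shiftZ 1 x.val (k + i)) = fun i : ℕ => x.val (k + 1 + i) := by
      funext i
      simp only [shiftZ]
      ring_nf
    rw [he]
    exact h⟩

/-- `ν` is an equilibrium measure for `φ`, i.e. a shift-invariant probability measure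
that is a tangent functional to the pressure at `φ`. -/
def IsEquilibrium (β : ℝ) (E : ℕ → Finset (ℤ → ℕ)) (φ : (ℤ → ℕ) → ℝ)
    (ν : Measure ↥(betaSigma β)) : Prop :=
  IsProbabilityMeasure ν ∧ ν.map (shiftSigma β) = ν ∧
  ∀ f : (ℤ → ℕ) → ℝ, ContinuousOn f (betaSigma β) →
    pressureLim φ E + ∫ x, f x.val ∂ν ≤ pressureLim (fun z => φ z + f z) E

/-- The cylinder set `{x ∈ Σ^β : x_1 ⋯ x_m = u}`. -/
def cylOne (β : ℝ) (m : ℕ) (u : List ℕ) : Set ↥(betaSigma β) :=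
  {x | ∀ i : ℕ, i < m → x.val (1 + (i : ℤ)) = u.getD i 0}

/-- The cylinder set `[x_0 ⋯ x_{m-1}]`. -/
def cylZero (β : ℝ) (m : ℕ) (x : ↥(betaSigma β)) : Set ↥(betaSigma β) :=
  {y | ∀ i : ℕ, i < m → y.val (i : ℤ) = x.val (i : ℤ)}

/-- `ν` is a weak Gibbs measure for the continuous function `ψ`. -/
def IsWeakGibbs (β : ℝ) (ν : Measure ↥(betaSigma β)) (ψ : (ℤ → ℕ) → ℝ) : Prop :=
  ∀ δ : ℝ, 0 < δ → ∃ N : ℕ, ∀ m : ℕ, N ≤ m → ∀ x : ↥(betaSigma β),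
    |(m : ℝ)⁻¹ * Real.log (ν (cylZero β m x)).toReal
      - (m : ℝ)⁻¹ * ∑ ℓ ∈ Finset.range m, ψ (shiftZ (ℓ : ℤ) x.val)| ≤ δ

/-- `w^♯`: the two-sided configuration equal to `w` on positions `1, …, |w|` and `0` elsewhere. -/
def sharp (w : List ℕ) : ℤ → ℕ :=
  fun j => if 1 ≤ j ∧ j ≤ (w.length : ℤ) then w.getD (j - 1).toNat 0 else 0

/-! ### Digits of the β-expansion of 1 -/

theorem betaR_pos_le (β : ℝ) (i : ℕ) : 0 < betaR β i ∧ betaR β i ≤ 1 := by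
  cases i with
  | zero => simp [betaR]
  | succ i =>
    have h1 := Int.le_ceil (β * betaR β i)
    have h2 := Int.ceil_lt_add_one (β * betaR β i)
    simp only [betaR]
    constructor <;> linarith

theorem betaC_zero_pos (β : ℝ) (hβ : 1 < β) : betaC β 0 ≠ 0 := by
  have : 1 < ⌈β⌉ := by
    rw [Int.lt_ceil]; simpa using hβ
  simp only [betaC, betaR, mul_one]
  omega

/-- `c^β` has a second nonzero digit: otherwise `r_{i+1} = β r_i` for all `i ≥ 1`, and the
remainders would be unbounded. -/
theorem exists_betaC_pos (β : ℝ) (hβ : 1 < β) : ∃ R : ℕ, 1 ≤ R ∧ betaC β R ≠ 0 := by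
  by_contra! hc
  have key : ∀ i : ℕ, betaR β (1 + i) = β ^ i * betaR β 1 := by
    intro i
    induction i with
    | zero => simp
    | succ i ih =>
      have h0 := hc (1 + i) (by omega)
      have hp := (betaR_pos_le β (1 + i)).1
      have h1 : 0 < ⌈β * betaR β (1 + i)⌉ := Int.ceil_pos.2 (by positivity)
      have h2 : ⌈β * betaR β (1 + i)⌉ = 1 := by
        simp only [betaC] at h0
        omega
      rw [show 1 + (i + 1) = (1 + i) + 1 by ring, betaR, h2, ih]
      push_cast
      ring
  have hp := (betaR_pos_le β 1).1
  obtain ⟨i, hi⟩ := pow_unbounded_of_one_lt (betaR β 1)⁻¹ hβ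
  have h1 := (betaR_pos_le β (1 + i)).2
  rw [key] at h1
  rw [inv_lt_iff_one_lt_mul₀ hp] at hi
  linarith

/-! ### Membership in the two-sided shift -/

theorem mem_betaSigma_iff (β : ℝ) (x : ℤ → ℕ) : x ∈ betaSigma β ↔
    (∀ i, (x i : ℤ) < ⌈β⌉) ∧ ∀ q : ℤ, lexLe (fun i : ℕ => x (q + i)) (betaC β) := by
  constructor
  · intro h
    refine ⟨fun i => by simpa using (h i).1 0, fun q => ?_⟩
    simpa using (h q).2 0
  · rintro ⟨h1, h2⟩ k
    refine ⟨fun i => h1 _, fun q => ?_⟩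
    have := h2 (k + q)
    simpa [add_assoc] using this

theorem shiftZ_shiftZ (a b : ℤ) (x : ℤ → ℕ) : shiftZ a (shiftZ b x) = shiftZ (b + a) x := by
  funext i
  simp only [shiftZ]
  congr 1
  ring

theorem shiftZ_zero (x : ℤ → ℕ) : shiftZ 0 x = x := by
  funext i
  simp [shiftZ]

theorem shiftZ_mem {β : ℝ} {x : ℤ → ℕ} (j : ℤ) (h : x ∈ betaSigma β) :
    shiftZ j x ∈ betaSigma β := by
  rw [mem_betaSigma_iff] at h ⊢
  refine ⟨fun i => h.1 _, fun q => ?_⟩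
  have := h.2 (q + j)
  convert this using 2
  simp only [shiftZ]
  congr 1
  ring

theorem lexLe_of_le {x y c : ℕ → ℕ} (hxy : ∀ i, x i ≤ y i) (h : lexLe y c) : lexLe x c := by
  classical
  by_cases hxc : x = c
  · exact Or.inl hxc
  · right
    have hne : ∃ i, x i ≠ c i := by
      by_contra! hh
      exact hxc (funext hh)
    refine ⟨Nat.find hne, fun j hj => by simpa using Nat.find_min hne hj, ?_⟩
    have hs := Nat.find_spec hne
    rcases h with h | ⟨i, hi, hlt⟩
    · have := hxy (Nat.find hne)
      rw [h] at this
      omega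
    · rcases lt_trichotomy i (Nat.find hne) with h3 | h3 | h3
      · have h4 := Nat.find_min hne h3
        have := hxy i
        simp only [ne_eq, not_not] at h4
        omega
      · have := hxy i
        rw [← h3]
        omega
      · have := hi _ h3
        have := hxy (Nat.find hne)
        omega

/-- Decreasing letters keeps a configuration in `Σ^β`. -/
theorem mem_of_le {β : ℝ} {x y : ℤ → ℕ} (hxy : ∀ i, x i ≤ y i) (h : y ∈ betaSigma β) :
    x ∈ betaSigma β := by
  rw [mem_betaSigma_iff] at h ⊢
  refine ⟨fun i => lt_of_le_of_lt (by exact_mod_cast hxy i) (h.1 i), fun q => ?_⟩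
  exact lexLe_of_le (fun i => hxy _) (h.2 q)

theorem zero_mem_betaSigma (β : ℝ) (hβ : 1 < β) : (fun _ => 0 : ℤ → ℕ) ∈ betaSigma β := by
  rw [mem_betaSigma_iff]
  refine ⟨fun i => ?_, fun q => Or.inr ⟨0, by simp, ?_⟩⟩
  · have : 0 < ⌈β⌉ := Int.ceil_pos.2 (by linarith)
    simpa using this
  · exact Nat.pos_of_ne_zero (betaC_zero_pos β hβ)

theorem betaSigma_subset_fullShift {β : ℝ} {x : ℤ → ℕ} (h : x ∈ betaSigma β) :
    x ∈ fullShift (bA β) := by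
  intro i
  have := ((mem_betaSigma_iff β x).1 h).1 i
  simp only [bA]
  omega

/-! ### Freeing the left part of a configuration -/

/-- No nonempty suffix of `(…, x_{k-2}, x_{k-1})` is a prefix of `c^β`; any element of `Σ^β` may
then be continued from site `k` on. -/
def FreeAt (β : ℝ) (k : ℤ) (x : ℤ → ℕ) : Prop :=
  ∀ p : ℤ, p < k → ∃ i : ℕ, p + i < k ∧ x (p + i) ≠ betaC β i

/-- The hat relation at site `k`: `x' = x` if `x` is already free at `k`, and otherwise `x'` is
obtained from `x` by lowering by one its last nonzero letter before `k`. -/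
def HatRel (β : ℝ) (k : ℤ) (x x' : ℤ → ℕ) : Prop :=
  (x' = x ∧ FreeAt β k x) ∨
    ∃ j : ℤ, j < k ∧ x j ≠ 0 ∧ (∀ i, j < i → i < k → x i = 0) ∧ ¬ FreeAt β k x ∧
      x' = Function.update x j (x j - 1)

/-- Replace `x` by `v` from site `k` on. -/
def glue (k : ℤ) (x v : ℤ → ℕ) : ℤ → ℕ := fun i => if i < k then x i else v i

/-- Gluing at a free site: suffixes starting before `k` already fall strictly below `c^β` before
they reach `k`. -/
theorem glue_mem {β : ℝ} {k : ℤ} {x v : ℤ → ℕ} (hx : x ∈ betaSigma β) (hf : FreeAt β k x)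
    (hv : v ∈ betaSigma β) : glue k x v ∈ betaSigma β := by
  rw [mem_betaSigma_iff] at hx hv ⊢
  refine ⟨fun i => ?_, fun q => ?_⟩
  · unfold glue
    split_ifs
    exacts [hx.1 i, hv.1 i]
  · by_cases hq : q < k
    · obtain ⟨i, hi, hne⟩ := hf q hq
      rcases hx.2 q with h | ⟨i0, h1, h2⟩
      · exact absurd (congrFun h i) hne
      · have hi0 : i0 ≤ i := by
          by_contra! hlt
          exact hne (h1 i hlt)
        refine Or.inr ⟨i0, fun j hj => ?_, ?_⟩
        · have : q + (j : ℤ) < k := by omega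
          simp only [glue, this, if_true]
          exact h1 j hj
        · have : q + (i0 : ℤ) < k := by omega
          simp only [glue, this, if_true]
          exact h2
    · have : (fun i : ℕ => glue k x v (q + i)) = fun i : ℕ => v (q + i) := by
        funext i
        have : ¬ q + (i : ℤ) < k := by omega
        simp [glue, this]
      rw [this]
      exact hv.2 q

theorem exists_hat {β : ℝ} (hβ : 1 < β) (k : ℤ) (x : ℤ → ℕ) : ∃ x', HatRel β k x x' := by
  by_cases hf : FreeAt β k x
  · exact ⟨x, Or.inl ⟨rfl, hf⟩⟩
  · have hf' := hf
    unfold FreeAt at hf'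
    push Not at hf'
    obtain ⟨p, hp, h⟩ := hf'
    have hxp : x p ≠ 0 := by
      have := h 0 (by simpa using hp)
      simp only [Nat.cast_zero, add_zero] at this
      rw [this]
      exact betaC_zero_pos β hβ
    obtain ⟨j, ⟨hj1, hj2⟩, hj3⟩ := Int.exists_greatest_of_bdd (P := fun j => j < k ∧ x j ≠ 0)
      ⟨k, fun z hz => hz.1.le⟩ ⟨p, hp, hxp⟩
    refine ⟨_, Or.inr ⟨j, hj1, hj2, fun i hi hik => ?_, hf, rfl⟩⟩
    by_contra hne
    have := hj3 i ⟨hik, hne⟩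
    omega

theorem HatRel.le {β : ℝ} {k : ℤ} {x x' : ℤ → ℕ} (h : HatRel β k x x') (i : ℤ) :
    x' i ≤ x i := by
  rcases h with ⟨rfl, _⟩ | ⟨j, _, _, _, _, rfl⟩
  · exact le_rfl
  · by_cases hij : i = j
    · subst hij; simp
    · simp [hij]

theorem HatRel.exists_site {β : ℝ} {k : ℤ} {x x' : ℤ → ℕ} (h : HatRel β k x x') :
    ∃ j : ℤ, j < k ∧ ∀ i, x i ≠ x' i → i = j := by
  rcases h with ⟨rfl, _⟩ | ⟨j, hj, _, _, _, rfl⟩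
  · exact ⟨k - 1, by omega, fun i hi => absurd rfl hi⟩
  · refine ⟨j, hj, fun i hi => ?_⟩
    by_contra hij
    simp [hij] at hi

/-- The lowered configuration is free: a suffix equal to a prefix of `c^β` would, before the
lowering, either have exceeded `c^β` or start with the letter `0`. -/
theorem HatRel.free {β : ℝ} (hβ : 1 < β) {k : ℤ} {x x' : ℤ → ℕ} (hx : x ∈ betaSigma β)
    (h : HatRel β k x x') : FreeAt β k x' := by
  have hle := h.le
  rcases h with ⟨rfl, hf⟩ | ⟨j, hj, hj0, hz, _, hx'⟩
  · exact hf
  intro p hp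
  by_contra! hcon
  have hxj : x' j < x j := by
    rw [hx', Function.update_self]; omega
  by_cases hpj : p ≤ j
  · obtain ⟨l, rfl⟩ : ∃ l : ℕ, j = p + l := ⟨(j - p).toNat, by omega⟩
    have hl := hcon l hj
    rcases ((mem_betaSigma_iff β x).1 hx).2 p with h | ⟨i0, h1, h2⟩
    · have := congrFun h l
      omega
    · simp only at h1 h2
      by_cases hi0 : p + (i0 : ℤ) < k
      · have := hcon i0 hi0
        have := hle (p + i0)
        omega
      · have := h1 l (by omega)
        omega
  · have h1 := hcon 0 (by simpa using hp)
    simp only [Nat.cast_zero, add_zero] at h1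
    have h2 := hle p
    rw [hz p (by omega) hp] at h2
    exact betaC_zero_pos β hβ (by omega)

/-- If `y + e_j` and `y + e_{j'}` with `j < j'` both have hat `y`, then the copy of a prefix of
`c^β` in `y + e_{j'}` starts at `j'`: a start at or before `j` would make `y + e_j` exceed `c^β`.
After `j'` that copy consists of zeros, so it does not reach the nonzero digit of index `R`. -/
theorem hat_two {β : ℝ} (hβ : 1 < β) {R : ℕ} (hR : 1 ≤ R) (hcR : betaC β R ≠ 0) {k : ℤ}
    {x x' y : ℤ → ℕ} (hx : x ∈ betaSigma β) {j j' : ℤ} (hjj : j < j') (hj'k : j' < k)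
    (hj0 : x j ≠ 0) (hz : ∀ i, j < i → i < k → x i = 0)
    (hxy : y = Function.update x j (x j - 1)) (hj0' : x' j' ≠ 0)
    (hz' : ∀ i, j' < i → i < k → x' i = 0) (hf' : ¬ FreeAt β k x')
    (hxy' : y = Function.update x' j' (x' j' - 1)) : k - R ≤ j' := by
  unfold FreeAt at hf'
  push Not at hf'
  obtain ⟨p, hp, h⟩ := hf'
  have e1 : ∀ i, i ≠ j' → x' i = y i := fun i hi => by rw [hxy']; simp [hi]
  have e2 : ∀ i, i ≠ j → x i = y i := fun i hi => by rw [hxy]; simp [hi]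
  have e3 : x j = y j + 1 := by rw [hxy, Function.update_self]; omega
  by_cases hpj : p ≤ j
  · exfalso
    obtain ⟨l, rfl⟩ : ∃ l : ℕ, j = p + l := ⟨(j - p).toNat, by omega⟩
    have hl := h l (by omega)
    rw [e1 _ (by omega)] at hl
    rcases ((mem_betaSigma_iff β x).1 hx).2 p with h' | ⟨i0, h1, h2⟩
    · have := congrFun h' l
      omega
    · simp only at h1 h2
      by_cases hi0 : i0 < l
      · have h3 := h i0 (by omega)
        rw [e1 _ (by omega), ← e2 _ (by omega)] at h3
        omega
      · rcases Nat.lt_or_ge l i0 with h4 | h4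
        · have := h1 l h4
          omega
        · obtain rfl : i0 = l := by omega
          omega
  · have hc0 := h 0 (by simpa using hp)
    simp only [Nat.cast_zero, add_zero] at hc0
    have hpj' : p = j' := by
      by_contra hne
      have h0 : x' p = 0 := by
        rcases lt_or_gt_of_ne hne with h3 | h3
        · rw [e1 p hne, ← e2 p (by omega)]
          exact hz p (by omega) hp
        · exact hz' p h3 hp
      exact betaC_zero_pos β hβ (by omega)
    subst hpj'
    by_contra! hlt
    have h1 := h R (by omega)
    rw [hz' (p + R) (by omega) (by omega)] at h1
    exact hcR h1.symm

/-- The hat relation is boundedly many to one. -/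
theorem hat_card {β : ℝ} (hβ : 1 < β) {R : ℕ} (hR : 1 ≤ R) (hcR : betaC β R ≠ 0) (k : ℤ)
    (y : ℤ → ℕ) (s : Finset (ℤ → ℕ)) (hs : ∀ x ∈ s, x ∈ betaSigma β ∧ HatRel β k x y) :
    s.card ≤ R + 2 := by
  classical
  have hex : ∀ x : ℤ → ℕ, ∃ tag : ℕ, x ∈ s → tag < R + 2 ∧
      ((tag = 0 ∧ y = x) ∨ ∃ j : ℤ, j < k ∧ x j ≠ 0 ∧ (∀ i, j < i → i < k → x i = 0) ∧
        ¬ FreeAt β k x ∧ y = Function.update x j (x j - 1) ∧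
        ((k - R ≤ j ∧ tag = (k - j).toNat) ∨ (j < k - R ∧ tag = R + 1))) := by
    intro x
    by_cases hxs : x ∈ s
    · rcases (hs x hxs).2 with ⟨h, _⟩ | ⟨j, h1, h2, h3, h4, h5⟩
      · exact ⟨0, fun _ => ⟨by omega, Or.inl ⟨rfl, h⟩⟩⟩
      · by_cases hj : k - R ≤ j
        · exact ⟨(k - j).toNat, fun _ => ⟨by omega,
            Or.inr ⟨j, h1, h2, h3, h4, h5, Or.inl ⟨hj, rfl⟩⟩⟩⟩
        · exact ⟨R + 1, fun _ => ⟨by omega,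
            Or.inr ⟨j, h1, h2, h3, h4, h5, Or.inr ⟨by omega, rfl⟩⟩⟩⟩
    · exact ⟨0, fun h => absurd h hxs⟩
  choose tag htag using hex
  have hcard := Finset.card_le_card_of_injOn (s := s) (t := Finset.range (R + 2)) tag
    (fun x hx => by simpa using (htag x hx).1) (by
      intro x hx x' hx' heq
      have A := (htag x hx).2
      have B := (htag x' hx').2
      rw [← heq] at B
      have same : ∀ j, x j ≠ 0 → x' j ≠ 0 → y = Function.update x j (x j - 1) →
          y = Function.update x' j (x' j - 1) → x = x' := by
        intro j a1 a2 a3 a4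
        funext i
        have a5 := congrFun a3 i
        have a6 := congrFun a4 i
        by_cases hij : i = j
        · subst hij
          rw [Function.update_self] at a5 a6
          omega
        · simp only [Function.update_of_ne hij] at a5 a6
          omega
      rcases A with ⟨a1, a2⟩ | ⟨j, a1, a2, a3, a4, a5, a6⟩
      · rcases B with ⟨b1, b2⟩ | ⟨j', b1, b2, b3, b4, b5, b6⟩
        · rw [← a2, b2]
        · omega
      · rcases B with ⟨b1, b2⟩ | ⟨j', b1, b2, b3, b4, b5, b6⟩
        · omega
        · rcases lt_trichotomy j j' with h | h | h
          · have := hat_two hβ hR hcR (hs x hx).1 h b1 a2 a3 a5 b2 b3 b4 b5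
            omega
          · subst h
            exact same j a2 b2 a5 b5
          · have := hat_two hβ hR hcR (hs x' hx').1 h a1 b2 b3 b5 a2 a3 a4 a5
            omega)
  simpa using hcard

/-! ### Oscillation estimates -/

/-- `h` has oscillation profile `d` on `Σ^β`: changing the configuration at the sites in a set `D`
changes `h` by at most `∑_{i ∈ D} d i`. -/
def OscB (β : ℝ) (h : (ℤ → ℕ) → ℝ) (d : ℤ → ℝ) : Prop :=
  (∀ i, 0 ≤ d i) ∧ Summable d ∧ ∀ x ∈ betaSigma β, ∀ y ∈ betaSigma β,
    |h x - h y| ≤ ∑' i, if x i ≠ y i then d i else 0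

/-- A function of bounded total oscillations has an oscillation profile: the single-site
oscillations of an extension to the full shift. Staying in the full shift while changing one site
at a time is what makes the extension necessary. -/
theorem normDelta_osc {β : ℝ} {φ : (ℤ → ℕ) → ℝ} (hφδ : normDelta β φ ≠ ⊤) :
    ∃ d, OscB β φ d := by
  classical
  obtain ⟨⟨g, hgc, hgφ⟩, hg⟩ : ∃ g : {g : (ℤ → ℕ) → ℝ // ContinuousOn g (fullShift (bA β)) ∧
      Set.EqOn g φ (betaSigma β)}, normDeltaBar (bA β) g.val ≠ ⊤ := by
    by_contra! hcon
    exact hφδ (by unfold normDelta; exact iInf_eq_top.2 hcon)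
  simp only at hg
  unfold normDeltaBar at hg
  have hfin : ∀ i, deltaOsc (bA β) g i ≠ ⊤ := ENNReal.ne_top_of_tsum_ne_top hg
  set d : ℤ → ℝ := fun i => (deltaOsc (bA β) g i).toReal with hd
  have hd0 : ∀ i, 0 ≤ d i := fun i => ENNReal.toReal_nonneg
  have hds : Summable d := ENNReal.summable_toReal hg
  refine ⟨d, hd0, hds, ?_⟩
  intro x hx y hy
  rw [← hgφ hx, ← hgφ hy]
  have hxf := betaSigma_subset_fullShift hx
  have hyf := betaSigma_subset_fullShift hy
  have hone : ∀ (i : ℤ), ∀ v ∈ fullShift (bA β), ∀ w ∈ fullShift (bA β),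
      (∀ k, k ≠ i → v k = w k) → |g v - g w| ≤ d i := by
    intro i v hv w hw hvw
    have : ENNReal.ofReal |g v - g w| ≤ deltaOsc (bA β) g i :=
      le_sSup ⟨v, hv, w, hw, hvw, rfl⟩
    exact (ENNReal.ofReal_le_iff_le_toReal (hfin i)).1 this
  -- interpolation between `x` and `y` through finitely many modified sites
  let X : Finset ℤ → ℤ → ℕ := fun F i => if i ∈ F then y i else x i
  have hX : ∀ F, X F ∈ fullShift (bA β) := by
    intro F i
    simp only [X]
    split_ifs
    exacts [hyf i, hxf i]
  have hsum : Summable (fun i => if x i ≠ y i then d i else 0) := by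
    refine Summable.of_nonneg_of_le (fun i => ?_) (fun i => ?_) hds
    · split_ifs
      exacts [hd0 i, le_rfl]
    · split_ifs
      exacts [le_rfl, hd0 i]
  have hF : ∀ F : Finset ℤ, |g x - g (X F)| ≤ ∑ i ∈ F, if x i ≠ y i then d i else 0 := by
    intro F
    induction F using Finset.induction_on with
    | empty => simp [X]
    | insert a F ha ih =>
      rw [Finset.sum_insert ha]
      by_cases hxy : x a = y a
      · have : X (insert a F) = X F := by
          funext i
          simp only [X, Finset.mem_insert]
          by_cases hia : i = a
          · subst hia; simp [ha, hxy]
          · simp [hia]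
        rw [this]
        simpa [hxy] using ih
      · have h1 := hone a (X F) (hX F) (X (insert a F)) (hX _) (by
          intro k hk
          simp [X, hk])
        simp only [hxy, ne_eq, not_false_eq_true, if_true]
        have h2 := abs_sub_le (g x) (g (X F)) (g (X (insert a F)))
        simp only [ne_eq] at ih
        linarith
  have hlim : Tendsto X atTop (nhds y) := by
    rw [tendsto_pi_nhds]
    intro i
    refine tendsto_const_nhds.congr' ?_
    filter_upwards [eventually_ge_atTop ({i} : Finset ℤ)] with F hFi
    have : i ∈ F := hFi (by simp)
    simp [X, this]
  have hglim : Tendsto (fun F => g (X F)) atTop (nhds (g y)) := by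
    have h1 := hgc y hyf
    exact h1.tendsto.comp (tendsto_nhdsWithin_iff.2 ⟨hlim, Eventually.of_forall hX⟩)
  have hlim2 : Tendsto (fun F => |g x - g (X F)|) atTop (nhds |g x - g y|) :=
    (tendsto_const_nhds.sub hglim).abs
  refine le_of_tendsto hlim2 (Eventually.of_forall fun F => (hF F).trans ?_)
  refine hsum.sum_le_tsum F (fun i _ => ?_)
  split_ifs
  exacts [hd0 i, le_rfl]

/-- If for every `q` at most `c q` indices `j ∈ J` satisfy `x (q + j) ≠ y (q + j)`, then the sums
of `h` over the `J`-translates of `x` and `y` differ by at most `∑_q d_q c_q`. -/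
theorem OscB.sum_le {β : ℝ} {h : (ℤ → ℕ) → ℝ} {d : ℤ → ℝ} (H : OscB β h d) {x y : ℤ → ℕ}
    (hx : x ∈ betaSigma β) (hy : y ∈ betaSigma β) (J : Finset ℤ) (c : ℤ → ℝ)
    (hc : ∀ q, (((J.filter (fun j => x (q + j) ≠ y (q + j))).card : ℕ) : ℝ) ≤ c q)
    (hs : Summable (fun q => d q * c q)) :
    |∑ j ∈ J, h (shiftZ j x) - ∑ j ∈ J, h (shiftZ j y)| ≤ ∑' q, d q * c q := by
  obtain ⟨hd0, hds, hosc⟩ := H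
  have hsum : ∀ j : ℤ, Summable (fun i => if x (i + j) ≠ y (i + j) then d i else 0) := by
    intro j
    refine Summable.of_nonneg_of_le (fun i => ?_) (fun i => ?_) hds
    · split_ifs
      exacts [hd0 i, le_rfl]
    · split_ifs
      exacts [le_rfl, hd0 i]
  rw [← Finset.sum_sub_distrib]
  calc |∑ j ∈ J, (h (shiftZ j x) - h (shiftZ j y))|
      ≤ ∑ j ∈ J, |h (shiftZ j x) - h (shiftZ j y)| := Finset.abs_sum_le_sum_abs _ _
    _ ≤ ∑ j ∈ J, ∑' i, (if x (i + j) ≠ y (i + j) then d i else 0) :=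
        Finset.sum_le_sum fun j _ => hosc _ (shiftZ_mem j hx) _ (shiftZ_mem j hy)
    _ = ∑' i, ∑ j ∈ J, (if x (i + j) ≠ y (i + j) then d i else 0) :=
        (Summable.tsum_finsetSum fun j _ => hsum j).symm
    _ ≤ ∑' q, d q * c q := by
        refine Summable.tsum_le_tsum (fun q => ?_) (summable_sum fun j _ => hsum j) hs
        rw [← Finset.sum_filter, Finset.sum_const, nsmul_eq_mul, mul_comm]
        exact mul_le_mul_of_nonneg_left (hc q) (hd0 q)

/-- The boundary term `∑_q d_q min(|q|, m)` bounding the interaction between a window of length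
`m` and its complement. -/
def bdry (d : ℤ → ℝ) (m : ℕ) : ℝ := ∑' q, d q * min |(q : ℝ)| m

theorem OscB.summable_min {β : ℝ} {h : (ℤ → ℕ) → ℝ} {d : ℤ → ℝ} (H : OscB β h d) (m : ℕ) :
    Summable (fun q : ℤ => d q * min |(q : ℝ)| m) := by
  refine Summable.of_nonneg_of_le (fun i => ?_) (fun i => ?_) (H.2.1.mul_right (m : ℝ))
  · exact mul_nonneg (H.1 i) (le_min (abs_nonneg _) (Nat.cast_nonneg _))
  · exact mul_le_mul_of_nonneg_left (min_le_right _ _) (H.1 i)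

theorem card_le_abs {S : Finset ℤ} {q : ℤ} (a b : ℤ) (h1 : 0 ≤ q → S ⊆ Finset.Ico (a - q) a)
    (h2 : q < 0 → S ⊆ Finset.Ico b (b - q)) : (S.card : ℝ) ≤ |(q : ℝ)| := by
  have : (S.card : ℤ) ≤ |q| := by
    rcases le_or_gt 0 q with h | h
    · have := Finset.card_le_card (h1 h)
      rw [Int.card_Ico] at this
      rw [abs_of_nonneg h]
      omega
    · have := Finset.card_le_card (h2 h)
      rw [Int.card_Ico] at this
      rw [abs_of_neg h]
      omega
  exact_mod_cast this

/-- Configurations agreeing on a window have nearly the same Birkhoff sum over it. -/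
theorem OscB.inside {β : ℝ} {h : (ℤ → ℕ) → ℝ} {d : ℤ → ℝ} (H : OscB β h d) {x y : ℤ → ℕ}
    (hx : x ∈ betaSigma β) (hy : y ∈ betaSigma β) (k : ℤ) (m : ℕ)
    (hxy : ∀ i, k ≤ i → i < k + m → x i = y i) :
    |∑ j ∈ Finset.Ico k (k + m), h (shiftZ j x) - ∑ j ∈ Finset.Ico k (k + m), h (shiftZ j y)|
      ≤ bdry d m := by
  refine H.sum_le hx hy _ _ (fun q => ?_) (H.summable_min m)
  have key : ∀ j ∈ (Finset.Ico k (k + (m : ℤ))).filter (fun j => x (q + j) ≠ y (q + j)),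
      (k ≤ j ∧ j < k + m) ∧ ¬ (k ≤ q + j ∧ q + j < k + m) := by
    intro j hj
    rw [Finset.mem_filter, Finset.mem_Ico] at hj
    exact ⟨hj.1, fun hh => hj.2 (hxy _ hh.1 hh.2)⟩
  refine le_min (card_le_abs (k + m) k (fun hq j hj => ?_) (fun hq j hj => ?_)) ?_
  · have := key j hj
    rw [Finset.mem_Ico]; omega
  · have := key j hj
    rw [Finset.mem_Ico]; omega
  · have := Finset.card_filter_le (Finset.Ico k (k + (m : ℤ))) (fun j => x (q + j) ≠ y (q + j))
    rw [Int.card_Ico] at this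
    exact_mod_cast this.trans (by omega)

/-- Configurations agreeing off a window have nearly the same sum over translates off it. -/
theorem OscB.outside {β : ℝ} {h : (ℤ → ℕ) → ℝ} {d : ℤ → ℝ} (H : OscB β h d) {x y : ℤ → ℕ}
    (hx : x ∈ betaSigma β) (hy : y ∈ betaSigma β) (k : ℤ) (m : ℕ)
    (hxy : ∀ i, ¬ (k ≤ i ∧ i < k + m) → x i = y i) (J : Finset ℤ)
    (hJ : ∀ j ∈ J, ¬ (k ≤ j ∧ j < k + m)) :
    |∑ j ∈ J, h (shiftZ j x) - ∑ j ∈ J, h (shiftZ j y)| ≤ bdry d m := by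
  refine H.sum_le hx hy _ _ (fun q => ?_) (H.summable_min m)
  have key : ∀ j ∈ J.filter (fun j => x (q + j) ≠ y (q + j)),
      (k ≤ q + j ∧ q + j < k + m) ∧ ¬ (k ≤ j ∧ j < k + m) := by
    intro j hj
    rw [Finset.mem_filter] at hj
    exact ⟨by_contra fun hh => hj.2 (hxy _ hh), hJ j hj.1⟩
  refine le_min (card_le_abs k (k + m) (fun hq j hj => ?_) (fun hq j hj => ?_)) ?_
  · have := key j hj
    rw [Finset.mem_Ico]; omega
  · have := key j hj
    rw [Finset.mem_Ico]; omega
  · have := Finset.card_le_card_of_injOn (t := Finset.Ico k (k + (m : ℤ))) (fun j => q + j)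
      (fun j hj => by
        have := key j hj
        simpa using this.1) (fun a _ b _ hab => by simpa using hab)
    rw [Int.card_Ico] at this
    exact_mod_cast this.trans (by omega)

/-- Modifying a configuration on a finite set `F` costs at most `|F| ∑ d`. -/
theorem OscB.finite_change {β : ℝ} {h : (ℤ → ℕ) → ℝ} {d : ℤ → ℝ} (H : OscB β h d) {x y : ℤ → ℕ}
    (hx : x ∈ betaSigma β) (hy : y ∈ betaSigma β) (F : Finset ℤ)
    (hxy : ∀ i, x i ≠ y i → i ∈ F) (J : Finset ℤ) :
    |∑ j ∈ J, h (shiftZ j x) - ∑ j ∈ J, h (shiftZ j y)| ≤ (∑' q, d q) * F.card := by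
  rw [← tsum_mul_right]
  refine H.sum_le hx hy _ _ (fun q => ?_) (H.2.1.mul_right _)
  have := Finset.card_le_card_of_injOn (s := J.filter (fun j => x (q + j) ≠ y (q + j)))
    (t := F) (fun j => q + j)
      (fun j hj => by
        rw [Finset.coe_filter] at hj
        exact hxy _ hj.2) (fun a _ b _ hab => by simpa using hab)
  exact_mod_cast this

/-- `bdry d m = o(m)`, by dominated convergence. -/
theorem OscB.bdry_tendsto {β : ℝ} {h : (ℤ → ℕ) → ℝ} {d : ℤ → ℝ} (H : OscB β h d) :
    Tendsto (fun m : ℕ => bdry d m / m) atTop (nhds 0) := by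
  have h1 : ∀ m : ℕ, bdry d m / m = ∑' q : ℤ, d q * (min |(q : ℝ)| m / m) := by
    intro m
    rw [bdry, ← tsum_div_const]
    exact tsum_congr fun q => by ring
  simp_rw [h1]
  rw [show (0 : ℝ) = ∑' _ : ℤ, (0 : ℝ) by simp]
  refine tendsto_tsum_of_dominated_convergence H.2.1 (fun q => ?_) (Eventually.of_forall ?_)
  · rw [show (0 : ℝ) = d q * 0 by simp]
    refine Tendsto.const_mul _ ?_
    refine squeeze_zero (g := fun m : ℕ => |(q : ℝ)| / m) (fun m => by positivity) (fun m => ?_)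
      (tendsto_const_div_atTop_nhds_zero_nat _)
    gcongr
    exact min_le_left _ _
  · intro m q
    have hq := H.1 q
    have h2 : (0 : ℝ) ≤ min |(q : ℝ)| m / m := by positivity
    rw [Real.norm_of_nonneg (mul_nonneg hq h2)]
    refine mul_le_of_le_one_right hq (div_le_one_of_le₀ (min_le_right _ _) (Nat.cast_nonneg _))

/-! ### Windows, partition functions and Fekete's lemma -/

/-- Elements of `Σ^β` vanishing outside the window `[k, k + m)`. -/
def winSet (β : ℝ) (k : ℤ) (m : ℕ) : Set (ℤ → ℕ) :=
  {z | z ∈ betaSigma β ∧ ∀ i, z i ≠ 0 → k ≤ i ∧ i < k + m}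

theorem winSet_finite (β : ℝ) (k : ℤ) (m : ℕ) : (winSet β k m).Finite := by
  let r : (ℤ → ℕ) → (Finset.Ico k (k + (m : ℤ)) → ℕ) := fun z i => z i
  refine Set.Finite.of_finite_image (f := r) ?_ ?_
  · refine (Set.Finite.pi (fun _ : Finset.Ico k (k + (m : ℤ)) =>
      Set.finite_Iio (bA β))).subset ?_
    rintro _ ⟨z, hz, rfl⟩
    simp only [Set.mem_pi, Set.mem_univ, forall_const, Set.mem_Iio]
    intro i
    exact betaSigma_subset_fullShift hz.1 i
  · intro z hz w hw hzw
    funext i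
    by_cases hi : k ≤ i ∧ i < k + m
    · exact congrFun hzw ⟨i, by simpa using hi⟩
    · have h1 : z i = 0 := by_contra fun h => hi (hz.2 i h)
      have h2 : w i = 0 := by_contra fun h => hi (hw.2 i h)
      rw [h1, h2]

/-- The finite set of elements of `Σ^β` vanishing outside `[k, k + m)`. -/
def EW (β : ℝ) (k : ℤ) (m : ℕ) : Finset (ℤ → ℕ) := (winSet_finite β k m).toFinset

theorem mem_EW {β : ℝ} {k : ℤ} {m : ℕ} {z : ℤ → ℕ} :
    z ∈ EW β k m ↔ z ∈ betaSigma β ∧ ∀ i, z i ≠ 0 → k ≤ i ∧ i < k + m := by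
  simp [EW, winSet]

/-- The Birkhoff sum `∑_{k ≤ j < k + m} h (T^j x)`. -/
def wsum (h : (ℤ → ℕ) → ℝ) (k : ℤ) (m : ℕ) (x : ℤ → ℕ) : ℝ :=
  ∑ j ∈ Finset.Ico k (k + m), h (shiftZ j x)

theorem wsum_shift (h : (ℤ → ℕ) → ℝ) (k l : ℤ) (m : ℕ) (x : ℤ → ℕ) :
    wsum h k m (shiftZ l x) = wsum h (k + l) m x := by
  unfold wsum
  refine Finset.sum_nbij' (fun j => j + l) (fun j => j - l) ?_ ?_ ?_ ?_ ?_
  · intro j hj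
    rw [Finset.mem_Ico] at hj ⊢
    omega
  · intro j hj
    rw [Finset.mem_Ico] at hj ⊢
    omega
  · intro j _
    simp
  · intro j _
    simp
  · intro j _
    rw [shiftZ_shiftZ, add_comm]

theorem wsum_add (h : (ℤ → ℕ) → ℝ) (k : ℤ) (m n : ℕ) (x : ℤ → ℕ) :
    wsum h k (m + n) x = wsum h k m x + wsum h (k + m) n x := by
  unfold wsum
  rw [← Finset.sum_union (Finset.Ico_disjoint_Ico_consecutive _ _ _),
    Finset.Ico_union_Ico_eq_Ico (by omega) (by omega)]
  push_cast
  rw [add_assoc]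

/-- The partition function of the window `[k, k + m)` with zero boundary condition. -/
def Zw (β : ℝ) (h : (ℤ → ℕ) → ℝ) (k : ℤ) (m : ℕ) : ℝ :=
  ∑ z ∈ EW β k m, Real.exp (wsum h k m z)

theorem Zw_shift (β : ℝ) (h : (ℤ → ℕ) → ℝ) (k : ℤ) (m : ℕ) : Zw β h k m = Zw β h 0 m := by
  unfold Zw
  refine Finset.sum_nbij' (fun z => shiftZ k z) (fun z => shiftZ (-k) z) ?_ ?_ ?_ ?_ ?_
  · intro z hz
    rw [mem_EW] at hz ⊢
    refine ⟨shiftZ_mem _ hz.1, fun i hi => ?_⟩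
    have := hz.2 _ hi
    omega
  · intro z hz
    rw [mem_EW] at hz ⊢
    refine ⟨shiftZ_mem _ hz.1, fun i hi => ?_⟩
    have := hz.2 _ hi
    omega
  · intro z _
    simp [shiftZ_shiftZ, shiftZ_zero]
  · intro z _
    simp [shiftZ_shiftZ, shiftZ_zero]
  · intro z _
    rw [wsum_shift, zero_add]

/-- Restriction of `x` to the window `[k, k + m)`, extended by zeros. -/
def trunc (k : ℤ) (m : ℕ) (x : ℤ → ℕ) : ℤ → ℕ := fun i => if k ≤ i ∧ i < k + m then x i else 0

theorem trunc_mem {β : ℝ} {x : ℤ → ℕ} (hx : x ∈ betaSigma β) (k : ℤ) (m : ℕ) :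
    trunc k m x ∈ EW β k m := by
  rw [mem_EW]
  refine ⟨mem_of_le (fun i => ?_) hx, fun i hi => ?_⟩
  · unfold trunc
    split_ifs
    exacts [le_rfl, Nat.zero_le _]
  · by_contra hh
    exact hi (by simp [trunc, hh])

/-- The supremum of the Birkhoff sum over all continuations in `Σ^β` of the word of `z` on
`[0, m)`. -/
def supw (β : ℝ) (h : (ℤ → ℕ) → ℝ) (m : ℕ) (z : ℤ → ℕ) : ℝ :=
  sSup ((wsum h 0 m) '' {x | x ∈ betaSigma β ∧ ∀ i : ℤ, 0 ≤ i → i < m → x i = z i})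

/-- The partition function with suprema over boundary conditions; exactly submultiplicative. -/
def Zbar (β : ℝ) (h : (ℤ → ℕ) → ℝ) (m : ℕ) : ℝ :=
  ∑ z ∈ EW β 0 m, Real.exp (supw β h m z)

section Fekete

variable {β : ℝ} {h : (ℤ → ℕ) → ℝ} {d : ℤ → ℝ}

theorem wsum_le_of_agree (H : OscB β h d) (k : ℤ) (m : ℕ) {x z : ℤ → ℕ} (hx : x ∈ betaSigma β)
    (hz : z ∈ betaSigma β) (hxz : ∀ i : ℤ, k ≤ i → i < k + m → x i = z i) :
    wsum h k m x ≤ wsum h k m z + bdry d m := by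
  have := (abs_le.1 (H.inside hx hz k m hxz)).2
  unfold wsum
  linarith

theorem supw_le (H : OscB β h d) (m : ℕ) {z : ℤ → ℕ} (hz : z ∈ betaSigma β) :
    supw β h m z ≤ wsum h 0 m z + bdry d m := by
  refine csSup_le ⟨_, z, ⟨hz, fun _ _ _ => rfl⟩, rfl⟩ ?_
  rintro _ ⟨x, ⟨hx, hxz⟩, rfl⟩
  exact wsum_le_of_agree H 0 m hx hz (by simpa using hxz)

theorem le_supw (H : OscB β h d) (m : ℕ) {x z : ℤ → ℕ} (hz : z ∈ betaSigma β)
    (hx : x ∈ betaSigma β) (hxz : ∀ i : ℤ, 0 ≤ i → i < m → x i = z i) :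
    wsum h 0 m x ≤ supw β h m z := by
  refine le_csSup ⟨wsum h 0 m z + bdry d m, ?_⟩ ⟨x, ⟨hx, hxz⟩, rfl⟩
  rintro _ ⟨x, ⟨hx, hxz⟩, rfl⟩
  exact wsum_le_of_agree H 0 m hx hz (by simpa using hxz)

theorem zero_mem_EW (hβ : 1 < β) (k : ℤ) (m : ℕ) : (fun _ => 0 : ℤ → ℕ) ∈ EW β k m := by
  rw [mem_EW]
  exact ⟨zero_mem_betaSigma β hβ, fun i hi => absurd rfl hi⟩

theorem Zw_pos (hβ : 1 < β) (k : ℤ) (m : ℕ) : 0 < Zw β h k m :=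
  Finset.sum_pos (fun _ _ => Real.exp_pos _) ⟨_, zero_mem_EW hβ k m⟩

theorem Zbar_pos (hβ : 1 < β) (m : ℕ) : 0 < Zbar β h m :=
  Finset.sum_pos (fun _ _ => Real.exp_pos _) ⟨_, zero_mem_EW hβ 0 m⟩

theorem Zw_le_Zbar (H : OscB β h d) (m : ℕ) : Zw β h 0 m ≤ Zbar β h m := by
  refine Finset.sum_le_sum fun z hz => Real.exp_le_exp.2 ?_
  have := (mem_EW.1 hz).1
  exact le_supw H m this this fun _ _ _ => rfl

theorem Zbar_le_Zw (H : OscB β h d) (m : ℕ) :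
    Zbar β h m ≤ Real.exp (bdry d m) * Zw β h 0 m := by
  unfold Zw Zbar
  rw [Finset.mul_sum]
  refine Finset.sum_le_sum fun z hz => ?_
  rw [← Real.exp_add]
  refine Real.exp_le_exp.2 ?_
  have := supw_le H m (mem_EW.1 hz).1
  linarith

theorem Zbar_mul (H : OscB β h d) (m n : ℕ) : Zbar β h (m + n) ≤ Zbar β h m * Zbar β h n := by
  classical
  let Φ : (ℤ → ℕ) → (ℤ → ℕ) × (ℤ → ℕ) := fun z => (trunc 0 m z, shiftZ m (trunc m n z))
  let F : (ℤ → ℕ) × (ℤ → ℕ) → ℝ := fun p => Real.exp (supw β h m p.1) * Real.exp (supw β h n p.2)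
  have hmem : ∀ z ∈ betaSigma β, Φ z ∈ EW β 0 m ×ˢ EW β 0 n := by
    intro z hz
    rw [Finset.mem_product]
    refine ⟨trunc_mem hz _ _, ?_⟩
    have := trunc_mem hz (m : ℤ) n
    rw [mem_EW] at this ⊢
    refine ⟨shiftZ_mem _ this.1, fun i hi => ?_⟩
    have := this.2 _ hi
    omega
  have hle : ∀ z ∈ EW β 0 (m + n), Real.exp (supw β h (m + n) z) ≤ F (Φ z) := by
    intro z hz
    have hz' := (mem_EW.1 hz).1
    have hp := Finset.mem_product.1 (hmem z hz')
    simp only [F]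
    rw [← Real.exp_add]
    refine Real.exp_le_exp.2 (csSup_le ⟨_, z, ⟨hz', fun _ _ _ => rfl⟩, rfl⟩ ?_)
    rintro _ ⟨x, ⟨hx, hxz⟩, rfl⟩
    rw [wsum_add]
    refine add_le_add (le_supw H m (mem_EW.1 hp.1).1 hx fun i h0 h1 => ?_) ?_
    · have : (0 : ℤ) ≤ i ∧ i < 0 + m := by omega
      simp only [Φ, trunc, this]
      simpa using hxz i h0 (by push_cast; omega)
    · have e : wsum h (0 + (m : ℤ)) n x = wsum h 0 n (shiftZ m x) := (wsum_shift h 0 m n x).symm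
      rw [e]
      refine le_supw H n (mem_EW.1 hp.2).1 (shiftZ_mem _ hx) fun i h0 h1 => ?_
      have : (m : ℤ) ≤ i + m ∧ i + m < m + n := by omega
      simp only [Φ, trunc, shiftZ, this]
      simpa using hxz (i + m) (by omega) (by push_cast; omega)
  have hinj : Set.InjOn Φ (EW β 0 (m + n) : Finset (ℤ → ℕ)) := by
    intro z hz w hw hzw
    have hz' := (mem_EW.1 hz).2
    have hw' := (mem_EW.1 hw).2
    have h1 := congrArg Prod.fst hzw
    have h2 := congrArg Prod.snd hzw
    funext i
    by_cases hi : 0 ≤ i ∧ i < 0 + m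
    · have := congrFun h1 i
      simpa only [Φ, trunc, hi, and_self, if_true] using this
    · by_cases hi2 : (m : ℤ) ≤ i ∧ i < m + n
      · have := congrFun h2 (i - m)
        simpa only [Φ, trunc, shiftZ, sub_add_cancel, hi2, and_self, if_true] using this
      · have e1 : z i = 0 := by
          by_contra hh
          have := hz' i hh
          push_cast at this
          omega
        have e2 : w i = 0 := by
          by_contra hh
          have := hw' i hh
          push_cast at this
          omega
        rw [e1, e2]
  calc Zbar β h (m + n) ≤ ∑ z ∈ EW β 0 (m + n), F (Φ z) := Finset.sum_le_sum hle
    _ = ∑ p ∈ (EW β 0 (m + n)).image Φ, F p := (Finset.sum_image hinj).symm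
    _ ≤ ∑ p ∈ EW β 0 m ×ˢ EW β 0 n, F p := by
        refine Finset.sum_le_sum_of_subset_of_nonneg ?_ fun p _ _ => by positivity
        intro p hp
        obtain ⟨z, hz, rfl⟩ := Finset.mem_image.1 hp
        exact hmem z (mem_EW.1 hz).1
    _ = Zbar β h m * Zbar β h n := by
        rw [Finset.sum_product, Zbar, Zbar, Finset.sum_mul_sum]

/-- By Fekete's lemma the pressure exists for every potential with a summable oscillation profile,
and it bounds the finite-volume free energies from below up to boundary terms. -/
theorem exists_pressure (hβ : 1 < β) (H : OscB β h d) : ∃ L : ℝ,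
    Tendsto (fun m : ℕ => Real.log (Zw β h 0 m) / m) atTop (nhds L) ∧
    ∀ m : ℕ, Real.exp (m * L) ≤ Real.exp (bdry d m) * Zw β h 0 m := by
  have hsub : Subadditive (fun m => Real.log (Zbar β h m)) := by
    intro m n
    rw [← Real.log_mul (Zbar_pos hβ m).ne' (Zbar_pos hβ n).ne']
    exact Real.log_le_log (Zbar_pos hβ _) (Zbar_mul H m n)
  set z0 : ℤ → ℕ := fun _ => 0 with hz0
  have hw0 : ∀ m : ℕ, wsum h 0 m z0 = m * h z0 := by
    intro m
    have : ∀ j : ℤ, shiftZ j z0 = z0 := fun j => rfl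
    simp [wsum, this]
  have hlow : ∀ m : ℕ, (m : ℝ) * h z0 ≤ Real.log (Zbar β h m) := by
    intro m
    rw [Real.le_log_iff_exp_le (Zbar_pos hβ m), ← hw0]
    refine le_trans ?_ (Zw_le_Zbar H m)
    exact Finset.single_le_sum (f := fun z => Real.exp (wsum h 0 m z))
      (fun _ _ => (Real.exp_pos _).le) (zero_mem_EW hβ 0 m)
  have hbdd : BddBelow (Set.range fun m : ℕ => Real.log (Zbar β h m) / m) := by
    refine ⟨min (h z0) 0, ?_⟩
    rintro _ ⟨m, rfl⟩
    rcases Nat.eq_zero_or_pos m with rfl | hm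
    · simp
    · have hm' : (0 : ℝ) < m := by exact_mod_cast hm
      refine (min_le_left _ _).trans ?_
      simp only
      rw [le_div_iff₀ hm']
      linarith [hlow m]
  have hlim := hsub.tendsto_lim hbdd
  refine ⟨hsub.lim, ?_, fun m => ?_⟩
  · have h1 : Tendsto (fun m : ℕ => Real.log (Zbar β h m) / m - bdry d m / m) atTop
        (nhds hsub.lim) := by simpa using hlim.sub H.bdry_tendsto
    refine tendsto_of_tendsto_of_tendsto_of_le_of_le h1 hlim (fun m => ?_) (fun m => ?_)
    · simp only
      rw [← sub_div]
      gcongr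
      have := Real.log_le_log (Zbar_pos hβ m) (Zbar_le_Zw H m)
      rw [Real.log_mul (Real.exp_pos _).ne' (Zw_pos hβ 0 m).ne', Real.log_exp] at this
      linarith
    · simp only
      gcongr
      · exact Zw_pos hβ 0 m
      · exact Zw_le_Zbar H m
  · refine le_trans ?_ (Zbar_le_Zw H m)
    rw [← Real.le_log_iff_exp_le (Zbar_pos hβ m)]
    rcases Nat.eq_zero_or_pos m with rfl | hm
    · simpa using hlow 0
    · have hm' : (0 : ℝ) < m := by exact_mod_cast hm
      have := hsub.lim_le_div hbdd hm.ne'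
      rw [le_div_iff₀ hm'] at this
      linarith

end Fekete

/-! ### Occupation of a cylinder in finite volume -/

theorem wordOf_eq (n : ℕ) (x : ℤ → ℕ) :
    wordOf n x = (List.range (2 * n + 1)).map (fun i : ℕ => x (-(n : ℤ) + (i : ℤ))) := by
  have : ∀ l : List ℕ, List.flatMap (fun a : ℕ => [(a : ℤ)]) l = l.map (fun a : ℕ => (a : ℤ)) := by
    intro l
    induction l with
    | nil => rfl
    | cons a l ih => simp [ih]
  simp [wordOf, this]

/-- The set `E^n` is unique: it consists of all elements of `Σ^β` vanishing off `[-n, n]`, since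
truncating an element of `Σ^β` to zero keeps it admissible. -/
theorem IsEn.eq_EW {β : ℝ} {n : ℕ} {E : Finset (ℤ → ℕ)} (hE : IsEn β n E) :
    E = EW β (-(n : ℤ)) (2 * n + 1) := by
  have word_eq : ∀ x y : ℤ → ℕ, wordOf n x = wordOf n y → ∀ i : ℤ, |i| ≤ n → x i = y i := by
    intro x y hxy i hi
    have hi' := abs_le.1 hi
    have h1 : (i + n).toNat < 2 * n + 1 := by omega
    have h2 := congrArg (fun l => l.getD (i + n).toNat 0) hxy
    have h3 : -(n : ℤ) + ((i + n).toNat : ℤ) = i := by omega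
    simpa only [wordOf_eq, List.getD_eq_getElem?_getD, List.getElem?_map, List.getElem?_range h1,
      Option.map_some, Option.getD_some, h3] using h2
  ext x
  rw [mem_EW]
  constructor
  · intro hx
    refine ⟨hE.1 x hx, fun i hi => ?_⟩
    have : |i| ≤ n := by
      by_contra! hh
      exact hi (hE.2.1 x hx i hh)
    have := abs_le.1 this
    push_cast
    omega
  · rintro ⟨hx, hsupp⟩
    have hmem : wordOf n x ∈ betaLangN β (2 * n + 1) := by
      refine ⟨⟨_, hx (-(n : ℤ)), 0, fun i hi => ?_⟩, by simp [wordOf_eq]⟩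
      have hi' : i < 2 * n + 1 := by simpa [wordOf_eq] using hi
      simp [wordOf_eq, List.getD, hi']
    obtain ⟨x', hx', hw⟩ := hE.2.2.surjOn hmem
    have : x' = x := by
      funext i
      by_cases hi : |i| ≤ n
      · exact word_eq _ _ hw i hi
      · rw [hE.2.1 x' hx' i (by omega)]
        by_contra hne
        have := hsupp i (Ne.symm hne)
        push_cast at this
        exact hi (abs_le.2 (by omega))
    rwa [← this]

theorem birkhoff_eq_wsum (φ : (ℤ → ℕ) → ℝ) (n : ℕ) (x : ℤ → ℕ) :
    birkhoff φ n x = wsum φ (-(n : ℤ)) (2 * n + 1) x := by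
  unfold birkhoff wsum
  congr 1
  ext j
  rw [Finset.mem_Icc, Finset.mem_Ico]
  push_cast
  omega

theorem XiAll_eq_Zw {β : ℝ} {n : ℕ} {E : Finset (ℤ → ℕ)} (hE : IsEn β n E)
    (φ : (ℤ → ℕ) → ℝ) : XiAll φ n E = Zw β φ (-(n : ℤ)) (2 * n + 1) := by
  unfold XiAll Zw
  rw [hE.eq_EW]
  simp_rw [birkhoff_eq_wsum]

theorem pressureSeq_tendsto {β : ℝ} {φ : (ℤ → ℕ) → ℝ} {E : ℕ → Finset (ℤ → ℕ)}
    (hE : ∀ n, IsEn β n (E n)) {L : ℝ}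
    (hL : Tendsto (fun m : ℕ => Real.log (Zw β φ 0 m) / m) atTop (nhds L)) :
    Tendsto (pressureSeq φ E) atTop (nhds L) := by
  have h1 : Tendsto (fun n : ℕ => 2 * n + 1) atTop atTop :=
    tendsto_atTop_mono (fun n => by simp only [id]; omega) tendsto_id
  refine (hL.comp h1).congr fun n => ?_
  simp only [pressureSeq, Function.comp, XiAll_eq_Zw (hE n), Zw_shift β φ (-(n : ℤ))]
  push_cast
  rw [div_eq_inv_mul]

/-- Comparison of a product of two sums with one sum along a map `Φ` that is at most `B` to one
and loses at most a factor `C` in the weights. -/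
theorem sum_mul_sum_le_of_fiber {α γ δ : Type*} [DecidableEq α] [DecidableEq γ] [DecidableEq δ]
    (X : Finset α) (Z : Finset γ)
    (Y : Finset δ) (Φ : α × γ → δ) (a : α → ℝ) (b : γ → ℝ) (w : δ → ℝ) (B : ℕ) (C : ℝ)
    (hC : 0 ≤ C) (hw : ∀ y, 0 ≤ w y) (hΦ : ∀ p ∈ X ×ˢ Z, Φ p ∈ Y)
    (hB : ∀ y ∈ Y, ((X ×ˢ Z).filter (fun p => Φ p = y)).card ≤ B)
    (hle : ∀ p ∈ X ×ˢ Z, a p.1 * b p.2 ≤ C * w (Φ p)) :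
    (∑ x ∈ X, a x) * ∑ z ∈ Z, b z ≤ B * C * ∑ y ∈ Y, w y := by
  calc (∑ x ∈ X, a x) * ∑ z ∈ Z, b z = ∑ p ∈ X ×ˢ Z, a p.1 * b p.2 := by
        rw [Finset.sum_product, Finset.sum_mul_sum]
    _ ≤ ∑ p ∈ X ×ˢ Z, C * w (Φ p) := Finset.sum_le_sum hle
    _ = ∑ y ∈ Y, ∑ p ∈ X ×ˢ Z with Φ p = y, C * w (Φ p) :=
        (Finset.sum_fiberwise_of_maps_to hΦ _).symm
    _ ≤ ∑ y ∈ Y, B * (C * w y) := by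
        refine Finset.sum_le_sum fun y hy => ?_
        rw [Finset.sum_congr rfl (g := fun _ => C * w y)
          (fun p hp => by rw [(Finset.mem_filter.1 hp).2]), Finset.sum_const, nsmul_eq_mul]
        have := hB y hy
        have h0 := mul_nonneg hC (hw y)
        gcongr
    _ = B * C * ∑ y ∈ Y, w y := by
        rw [Finset.mul_sum]
        exact Finset.sum_congr rfl fun y _ => by ring

theorem wsum_add_smul (φ f : (ℤ → ℕ) → ℝ) (t : ℝ) (k : ℤ) (m : ℕ) (x : ℤ → ℕ) :
    wsum (fun z => φ z + t * f z) k m x = wsum φ k m x + t * wsum f k m x := by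
  simp only [wsum, Finset.sum_add_distrib, Finset.mul_sum]

open Classical in
/-- The replacement estimate. In a configuration showing the word of `y₀` on `[k, k + m)`, that
word is exchanged for an arbitrary word of the same length, after lowering at most one letter to the
left of the window and at most one letter of the new word so that the result is admissible. -/
theorem one_point {β : ℝ} (hβ : 1 < β) {R : ℕ} (hR : 1 ≤ R) (hcR : betaC β R ≠ 0)
    {φ f : (ℤ → ℕ) → ℝ} {d e : ℤ → ℝ} (H : OscB β φ d) (Hf : OscB β f e) {t : ℝ} (ht : 0 ≤ t)
    (a k : ℤ) (M m : ℕ) (hak : a ≤ k) (hkm : k + m ≤ a + M) {y₀ : ℤ → ℕ} (hy₀ : y₀ ∈ betaSigma β) :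
    (∑ x ∈ (EW β a M).filter (fun x => ∀ i, k ≤ i → i < k + m → x i = y₀ i),
      Real.exp (wsum (fun z => φ z + t * f z) a M x)) * Zw β φ k m ≤
    ((R + 2) * (R + 2) : ℕ) * Real.exp (2 * (∑' q, d q) + 3 * bdry d m +
      t * ((∑' q, e q) * (m + 1)) + wsum φ k m y₀) *
      Zw β (fun z => φ z + t * f z) a M := by
  choose hat hhat using fun (k : ℤ) (x : ℤ → ℕ) => exists_hat hβ k x
  set X := (EW β a M).filter (fun x => ∀ i, k ≤ i → i < k + m → x i = y₀ i) with hX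
  have hXm : ∀ x ∈ X, x ∈ betaSigma β ∧ (∀ i, x i ≠ 0 → a ≤ i ∧ i < a + M) ∧
      ∀ i, k ≤ i → i < k + m → x i = y₀ i := by
    intro x hx
    rw [hX, Finset.mem_filter, mem_EW] at hx
    exact ⟨hx.1.1, hx.1.2, hx.2⟩
  let Φ : (ℤ → ℕ) × (ℤ → ℕ) → (ℤ → ℕ) := fun p =>
    glue k (hat k p.1) (glue (k + m) (hat (k + m) p.2) p.1)
  have hhatle : ∀ k x i, hat k x i ≤ x i := fun k x i => (hhat k x).le i
  have hhatge : ∀ k x i, k ≤ i → hat k x i = x i := by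
    intro k x i hi
    by_contra hne
    obtain ⟨j, hj, hj2⟩ := (hhat k x).exists_site
    have := hj2 i (Ne.symm hne)
    omega
  have hhatm : ∀ k x, x ∈ betaSigma β → hat k x ∈ betaSigma β := fun k x hx =>
    mem_of_le (hhatle k x) hx
  have hΦm : ∀ p, p.1 ∈ betaSigma β → p.2 ∈ betaSigma β → Φ p ∈ betaSigma β := by
    intro p h1 h2
    exact glue_mem (hhatm _ _ h1) ((hhat k p.1).free hβ h1)
      (glue_mem (hhatm _ _ h2) ((hhat _ p.2).free hβ h2) h1)
  have hΦl : ∀ p i, i < k → Φ p i = hat k p.1 i := by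
    intro p i hi
    simp [Φ, glue, hi]
  have hΦc : ∀ p i, k ≤ i → i < k + m → Φ p i = hat (k + m) p.2 i := by
    intro p i hi hi2
    simp [Φ, glue, hi, hi2]
  have hΦr : ∀ p i, k + m ≤ i → Φ p i = p.1 i := by
    intro p i hi
    have : ¬ i < k := by omega
    simp [Φ, glue, hi, this]
  refine sum_mul_sum_le_of_fiber X (EW β k m) (EW β a M) Φ _ (fun z => Real.exp (wsum φ k m z)) _
    ((R + 2) * (R + 2)) _ (Real.exp_pos _).le (fun y => (Real.exp_pos _).le) ?_ ?_ ?_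
  · intro p hp
    obtain ⟨h1, h2⟩ := Finset.mem_product.1 hp
    obtain ⟨a1, a2, a3⟩ := hXm _ h1
    obtain ⟨b1, b2⟩ := mem_EW.1 h2
    rw [mem_EW]
    refine ⟨hΦm p a1 b1, fun i hi => ?_⟩
    by_cases hik : i < k
    · rw [hΦl p i hik] at hi
      have := hhatle k p.1 i
      exact a2 i (by omega)
    · by_cases hik2 : i < k + m
      · omega
      · rw [hΦr p i (by omega)] at hi
        exact a2 i hi
  · intro y hy
    set Y1 : ℤ → ℕ := fun i => if k ≤ i ∧ i < k + m then y₀ i else y i with hY1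
    set Y2 : ℤ → ℕ := fun i => if k ≤ i ∧ i < k + m then y i else 0 with hY2
    have hsub : ((X ×ˢ EW β k m).filter (fun p => Φ p = y)) ⊆
        (X.filter (fun x => hat k x = Y1)) ×ˢ ((EW β k m).filter (fun z => hat (k + m) z = Y2)) := by
      intro p hp
      rw [Finset.mem_filter, Finset.mem_product] at hp
      obtain ⟨⟨h1, h2⟩, h3⟩ := hp
      obtain ⟨a1, a2, a3⟩ := hXm _ h1
      obtain ⟨b1, b2⟩ := mem_EW.1 h2
      refine Finset.mem_product.2 ⟨Finset.mem_filter.2 ⟨h1, ?_⟩, Finset.mem_filter.2 ⟨h2, ?_⟩⟩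
      · funext i
        by_cases hi : i < k
        · have : ¬ (k ≤ i ∧ i < k + m) := by omega
          simp only [hY1, this, if_false]
          rw [← h3, hΦl p i hi]
        · rw [hhatge _ _ _ (by omega)]
          by_cases hi2 : i < k + m
          · have : k ≤ i ∧ i < k + m := by omega
            simp only [hY1, this, and_self, if_true]
            exact a3 i this.1 this.2
          · have : ¬ (k ≤ i ∧ i < k + m) := by omega
            simp only [hY1, this, if_false]
            rw [← h3, hΦr p i (by omega)]
      · funext i
        by_cases hi : k ≤ i ∧ i < k + m
        · simp only [hY2, hi, and_self, if_true]
          rw [← h3, hΦc p i hi.1 hi.2]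
        · simp only [hY2, hi, if_false]
          have h4 : p.2 i = 0 := by_contra fun hh => hi (b2 i hh)
          have := hhatle (k + m) p.2 i
          omega
    refine (Finset.card_le_card hsub).trans ?_
    rw [Finset.card_product]
    refine Nat.mul_le_mul (hat_card hβ hR hcR k Y1 _ fun x hx => ?_)
      (hat_card hβ hR hcR (k + m) Y2 _ fun x hx => ?_)
    · rw [Finset.mem_filter] at hx
      exact ⟨(hXm _ hx.1).1, hx.2 ▸ hhat k x⟩
    · rw [Finset.mem_filter] at hx
      exact ⟨(mem_EW.1 hx.1).1, hx.2 ▸ hhat (k + m) x⟩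
  · intro p hp
    obtain ⟨h1, h2⟩ := Finset.mem_product.1 hp
    obtain ⟨a1, a2, a3⟩ := hXm _ h1
    obtain ⟨b1, b2⟩ := mem_EW.1 h2
    simp only [wsum_add_smul]
    rw [← Real.exp_add, ← Real.exp_add]
    refine Real.exp_le_exp.2 ?_
    have hp1 := hhatm k _ a1
    have hp2 := hhatm (k + m) _ b1
    have hp3 := hΦm p a1 b1
    obtain ⟨j1, hj1, hj1'⟩ := (hhat k p.1).exists_site
    obtain ⟨j2, hj2, hj2'⟩ := (hhat (k + m) p.2).exists_site
    have one : ∀ {x y : ℤ → ℕ} (_ : x ∈ betaSigma β) (_ : y ∈ betaSigma β) (j : ℤ)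
        (_ : ∀ i, x i ≠ y i → i = j) (J : Finset ℤ),
        ∑ j ∈ J, φ (shiftZ j x) ≤ ∑ j ∈ J, φ (shiftZ j y) + ∑' q, d q := by
      intro x y hx hy j hj J
      have := (abs_le.1 (H.finite_change hx hy {j} (fun i hi => by simpa using hj i hi) J)).2
      simp only [Finset.card_singleton, Nat.cast_one, mul_one] at this
      linarith
    -- the window `W` and its complement inside the volume
    set I := Finset.Ico a (a + M) with hI
    set W := Finset.Ico k (k + (m : ℤ)) with hW
    have hWI : W ⊆ I := by
      intro j hj
      rw [hW, Finset.mem_Ico] at hj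
      rw [hI, Finset.mem_Ico]
      omega
    have hsplit : ∀ x, wsum φ a M x = ∑ j ∈ I \ W, φ (shiftZ j x) + wsum φ k m x :=
      fun x => (Finset.sum_sdiff hWI).symm
    have s1 : wsum φ a M p.1 ≤ wsum φ a M (hat k p.1) + ∑' q, d q := one a1 hp1 j1 hj1' I
    have s2 : wsum φ k m p.2 ≤ wsum φ k m (hat (k + m) p.2) + ∑' q, d q := one b1 hp2 j2 hj2' W
    have s3 := (abs_le.1 (H.outside hp1 hp3 k m (fun i hi => by
      by_cases hik : i < k
      · rw [hΦl p i hik]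
      · rw [hΦr p i (by omega), hhatge _ _ _ (by omega)]) (I \ W) (fun j hj => by
      have hj2 := (Finset.mem_sdiff.1 hj).2
      rwa [hW, Finset.mem_Ico] at hj2))).2
    have s4 : wsum φ k m (hat k p.1) ≤ wsum φ k m y₀ + bdry d m :=
      wsum_le_of_agree H k m hp1 hy₀ fun i hi hi2 => by
        rw [hhatge _ _ _ hi]
        exact a3 i hi hi2
    have s5 : wsum φ k m (hat (k + m) p.2) ≤ wsum φ k m (Φ p) + bdry d m :=
      wsum_le_of_agree H k m hp2 hp3 fun i hi hi2 => (hΦc p i hi hi2).symm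
    have s6 : wsum f a M p.1 ≤ wsum f a M (Φ p) + (∑' q, e q) * (m + 1) := by
      have h3 := (abs_le.1 (Hf.finite_change a1 hp3 (insert j1 W) (fun i hi => by
        rw [Finset.mem_insert, hW, Finset.mem_Ico]
        by_cases hik : i < k
        · left
          rw [hΦl p i hik] at hi
          exact hj1' i hi
        · right
          by_contra hik2
          exact hi (hΦr p i (by omega)).symm) I)).2
      have h4 : ((insert j1 W).card : ℝ) ≤ m + 1 := by
        have := Finset.card_insert_le j1 W
        rw [hW, Int.card_Ico] at this
        exact_mod_cast this.trans (by omega)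
      have h0 : 0 ≤ ∑' q, e q := tsum_nonneg Hf.1
      have h5 := mul_le_mul_of_nonneg_left h4 h0
      unfold wsum
      linarith
    have s7 := mul_le_mul_of_nonneg_left s6 ht
    have e1 := hsplit (hat k p.1)
    have e2 := hsplit (Φ p)
    linarith

/-! ### The perturbing observable and the tangent inequality -/

/-- The indicator of the event `x_1 ⋯ x_m = y_1 ⋯ y_m`, as a product of site indicators. -/
def cylInd (m : ℕ) (y x : ℤ → ℕ) : ℝ :=
  ∏ i ∈ Finset.range m, if x (1 + (i : ℤ)) = y (1 + (i : ℤ)) then 1 else 0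

open Classical in
theorem cylInd_eq (m : ℕ) (y x : ℤ → ℕ) :
    cylInd m y x = if ∀ i : ℕ, i < m → x (1 + (i : ℤ)) = y (1 + (i : ℤ)) then 1 else 0 := by
  unfold cylInd
  rw [Finset.prod_ite_zero]
  simp

theorem cylInd_continuous (m : ℕ) (y : ℤ → ℕ) : Continuous (cylInd m y) := by
  refine continuous_finsetProd _ fun i _ => ?_
  exact (continuous_of_discreteTopology
    (f := fun v : ℕ => if v = y (1 + (i : ℤ)) then (1 : ℝ) else 0)).comp
    (continuous_apply (1 + (i : ℤ)))

theorem cylInd_osc (β : ℝ) (m : ℕ) (y : ℤ → ℕ) : ∃ e, OscB β (cylInd m y) e := by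
  classical
  set e : ℤ → ℝ := fun i => if 1 ≤ i ∧ i ≤ m then 1 else 0 with he
  have he0 : ∀ i, 0 ≤ e i := fun i => by
    simp only [he]
    split_ifs <;> norm_num
  have hes : Summable e := summable_of_ne_finset_zero (s := Finset.Icc 1 (m : ℤ)) fun i hi => by
    rw [Finset.mem_Icc] at hi
    simp [he, hi]
  refine ⟨e, he0, hes, fun x _ x' _ => ?_⟩
  have h0 : ∀ i, 0 ≤ (if x i ≠ x' i then e i else 0) := fun i => by
    split_ifs
    exacts [he0 i, le_rfl]
  by_cases h : ∀ i : ℕ, i < m → x (1 + (i : ℤ)) = x' (1 + (i : ℤ))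
  · have : cylInd m y x = cylInd m y x' :=
      Finset.prod_congr rfl fun i hi => by rw [h i (Finset.mem_range.1 hi)]
    rw [this, sub_self, abs_zero]
    exact tsum_nonneg h0
  · push Not at h
    obtain ⟨i, hi, hne⟩ := h
    have hs : Summable (fun i => if x i ≠ x' i then e i else 0) := by
      refine Summable.of_nonneg_of_le h0 (fun i => ?_) hes
      split_ifs
      exacts [le_rfl, he0 i]
    have h1 := hs.le_tsum (1 + (i : ℤ)) fun j _ => h0 j
    have h2 : (1 : ℤ) ≤ 1 + (i : ℤ) ∧ 1 + (i : ℤ) ≤ m := by omega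
    simp only [ne_eq, hne, not_false_eq_true, if_true, he, h2, and_self] at h1
    refine le_trans ?_ h1
    rw [cylInd_eq, cylInd_eq]
    split_ifs <;> norm_num

theorem OscB.add_smul {β : ℝ} {φ f : (ℤ → ℕ) → ℝ} {d e : ℤ → ℝ} (H : OscB β φ d)
    (Hf : OscB β f e) {t : ℝ} (ht : 0 ≤ t) :
    OscB β (fun z => φ z + t * f z) (fun i => d i + t * e i) := by
  refine ⟨fun i => add_nonneg (H.1 i) (mul_nonneg ht (Hf.1 i)), H.2.1.add (Hf.2.1.mul_left t),
    fun x hx y hy => ?_⟩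
  have hs : ∀ {g : ℤ → ℝ}, (∀ i, 0 ≤ g i) → Summable g →
      Summable (fun i => if x i ≠ y i then g i else 0) := by
    intro g hg hgs
    refine Summable.of_nonneg_of_le (fun i => ?_) (fun i => ?_) hgs
    · split_ifs
      exacts [hg i, le_rfl]
    · split_ifs
      exacts [le_rfl, hg i]
  have h1 := H.2.2 x hx y hy
  have h2 := mul_le_mul_of_nonneg_left (Hf.2.2 x hx y hy) ht
  have h3 : (∑' i, if x i ≠ y i then d i + t * e i else 0) =
      (∑' i, if x i ≠ y i then d i else 0) + t * ∑' i, if x i ≠ y i then e i else 0 := by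
    rw [← tsum_mul_left, ← (hs H.1 H.2.1).tsum_add ((hs Hf.1 Hf.2.1).mul_left t)]
    refine tsum_congr fun i => ?_
    split_ifs <;> simp
  rw [h3]
  have h4 : |φ x + t * f x - (φ y + t * f y)| ≤ |φ x - φ y| + t * |f x - f y| := by
    rw [← abs_of_nonneg ht, ← abs_mul, abs_of_nonneg ht]
    refine le_trans (le_of_eq ?_) (abs_add_le _ _)
    congr 1
    ring
  linarith

/-- The Gibbs–Bogoliubov inequality for finite sums. -/
theorem log_sum_le {α : Type*} (s : Finset α) (hs : s.Nonempty) (b X : α → ℝ) (c : ℝ)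
    (hc : ∑ x ∈ s, Real.exp (b x + X x) * X x ≤ c * ∑ x ∈ s, Real.exp (b x + X x)) :
    Real.log (∑ x ∈ s, Real.exp (b x + X x)) - Real.log (∑ x ∈ s, Real.exp (b x)) ≤ c := by
  set A := ∑ x ∈ s, Real.exp (b x + X x) with hA
  have hA0 : 0 < A := Finset.sum_pos (fun _ _ => Real.exp_pos _) hs
  have hB0 : 0 < ∑ x ∈ s, Real.exp (b x) := Finset.sum_pos (fun _ _ => Real.exp_pos _) hs
  have h1 : Real.exp (-c) * A ≤ ∑ x ∈ s, Real.exp (b x) := by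
    calc Real.exp (-c) * A ≤ Real.exp (-c) *
          ((1 + c) * A - ∑ x ∈ s, Real.exp (b x + X x) * X x) := by
          refine mul_le_mul_of_nonneg_left ?_ (Real.exp_pos _).le
          linarith
      _ = ∑ x ∈ s, Real.exp (b x + X x) * (Real.exp (-c) * (1 + c - X x)) := by
          rw [hA, Finset.mul_sum, ← Finset.sum_sub_distrib, Finset.mul_sum]
          exact Finset.sum_congr rfl fun x _ => by ring
      _ ≤ ∑ x ∈ s, Real.exp (b x) := by
          refine Finset.sum_le_sum fun x _ => ?_
          have h2 : Real.exp (-c) * (1 + c - X x) ≤ Real.exp (-X x) := by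
            have := Real.add_one_le_exp (c - X x)
            calc Real.exp (-c) * (1 + c - X x) ≤ Real.exp (-c) * Real.exp (c - X x) := by
                  refine mul_le_mul_of_nonneg_left ?_ (Real.exp_pos _).le
                  linarith
              _ = Real.exp (-X x) := by
                  rw [← Real.exp_add]
                  congr 1
                  ring
          calc _ ≤ Real.exp (b x + X x) * Real.exp (-X x) :=
                mul_le_mul_of_nonneg_left h2 (Real.exp_pos _).le
            _ = Real.exp (b x) := by
                rw [← Real.exp_add]
                congr 1
                ring
  have h3 := Real.log_le_log (by positivity) h1
  rw [Real.log_mul (Real.exp_pos _).ne' hA0.ne', Real.log_exp] at h3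
  linarith

open Classical in
/-- In the volume `[-n, n]` the expected number of occurrences of the word of `y` is at most
`2 n + 1` times the bound of `one_point`, up to the at most `m` occurrences cut by the boundary. -/
theorem occupation {β : ℝ} (hβ : 1 < β) {R : ℕ} (hR : 1 ≤ R) (hcR : betaC β R ≠ 0)
    {φ : (ℤ → ℕ) → ℝ} {d e : ℤ → ℝ} (H : OscB β φ d) {m : ℕ} {y : ℤ → ℕ}
    (hy : y ∈ betaSigma β) (Hf : OscB β (cylInd m y) e) {t : ℝ} (ht : 0 ≤ t) {K : ℝ}
    (hK : ((R + 2) * (R + 2) : ℕ) * Real.exp (2 * (∑' q, d q) + 3 * bdry d m +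
      t * ((∑' q, e q) * (m + 1)) + wsum φ 1 m y) ≤ K * Zw β φ 0 m) (n : ℕ) :
    ∑ x ∈ EW β (-(n : ℤ)) (2 * n + 1),
      Real.exp (wsum (fun z => φ z + t * cylInd m y z) (-(n : ℤ)) (2 * n + 1) x) *
        wsum (cylInd m y) (-(n : ℤ)) (2 * n + 1) x ≤
    ((2 * n + 1) * K + m) *
      Zw β (fun z => φ z + t * cylInd m y z) (-(n : ℤ)) (2 * n + 1) := by
  set ψ : (ℤ → ℕ) → ℝ := fun z => φ z + t * cylInd m y z with hψ
  set Ξ := Zw β ψ (-(n : ℤ)) (2 * n + 1) with hΞ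
  have hΞ0 : 0 < Ξ := Zw_pos hβ _ _
  have hZ0 : 0 < Zw β φ 0 m := Zw_pos hβ _ _
  have hK0 : 0 ≤ K := by
    by_contra! hneg
    have := mul_neg_of_neg_of_pos hneg hZ0
    have h2 : (0 : ℝ) ≤ ((R + 2) * (R + 2) : ℕ) * Real.exp (2 * (∑' q, d q) + 3 * bdry d m +
      t * ((∑' q, e q) * (m + 1)) + wsum φ 1 m y) := by positivity
    linarith
  set I := Finset.Ico (-(n : ℤ)) (-(n : ℤ) + (2 * n + 1 : ℕ)) with hI
  have hind : ∀ x : ℤ → ℕ, 0 ≤ cylInd m y x ∧ cylInd m y x ≤ 1 := by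
    intro x
    rw [cylInd_eq]
    split_ifs <;> norm_num
  have hall : ∀ j : ℤ, ∑ x ∈ EW β (-(n : ℤ)) (2 * n + 1),
      Real.exp (wsum ψ (-(n : ℤ)) (2 * n + 1) x) * cylInd m y (shiftZ j x) ≤ Ξ := by
    intro j
    refine Finset.sum_le_sum fun x _ => ?_
    exact mul_le_of_le_one_right (Real.exp_pos _).le (hind _).2
  have hgood : ∀ j : ℤ, -(n : ℤ) ≤ j → j ≤ n - m → ∑ x ∈ EW β (-(n : ℤ)) (2 * n + 1),
      Real.exp (wsum ψ (-(n : ℤ)) (2 * n + 1) x) * cylInd m y (shiftZ j x) ≤ K * Ξ := by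
    intro j hj1 hj2
    have h1 := one_point hβ hR hcR H Hf ht (-(n : ℤ)) (j + 1) (2 * n + 1) m (by omega)
      (by push_cast; omega) (shiftZ_mem (-j) hy)
    rw [wsum_shift, show j + 1 + -j = 1 by ring, Zw_shift β φ (j + 1)] at h1
    have h2 : ∑ x ∈ EW β (-(n : ℤ)) (2 * n + 1),
        Real.exp (wsum ψ (-(n : ℤ)) (2 * n + 1) x) * cylInd m y (shiftZ j x) =
        ∑ x ∈ (EW β (-(n : ℤ)) (2 * n + 1)).filter
          (fun x => ∀ i, j + 1 ≤ i → i < j + 1 + m → x i = shiftZ (-j) y i),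
        Real.exp (wsum ψ (-(n : ℤ)) (2 * n + 1) x) := by
      rw [Finset.sum_filter]
      refine Finset.sum_congr rfl fun x _ => ?_
      rw [cylInd_eq]
      have : (∀ i : ℕ, i < m → shiftZ j x (1 + (i : ℤ)) = y (1 + (i : ℤ))) ↔
          (∀ i, j + 1 ≤ i → i < j + 1 + m → x i = shiftZ (-j) y i) := by
        constructor
        · intro h i hi hi2
          have := h (i - j - 1).toNat (by omega)
          have e1 : 1 + (((i - j - 1).toNat : ℕ) : ℤ) = i - j := by omega
          rw [e1] at this
          simpa [shiftZ, sub_eq_add_neg] using this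
        · intro h i hi
          have := h (1 + i + j) (by omega) (by omega)
          simpa [shiftZ] using this
      simp only [this, mul_ite, mul_one, mul_zero]
    rw [h2]
    refine le_of_mul_le_mul_right (h1.trans ?_) hZ0
    calc _ ≤ K * Zw β φ 0 m * Ξ := mul_le_mul_of_nonneg_right hK hΞ0.le
      _ = K * Ξ * Zw β φ 0 m := by ring
  calc _ = ∑ j ∈ I, ∑ x ∈ EW β (-(n : ℤ)) (2 * n + 1),
        Real.exp (wsum ψ (-(n : ℤ)) (2 * n + 1) x) * cylInd m y (shiftZ j x) := by
        rw [Finset.sum_comm]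
        refine Finset.sum_congr rfl fun x _ => ?_
        have hw : wsum (cylInd m y) (-(n : ℤ)) (2 * n + 1) x =
            ∑ j ∈ I, cylInd m y (shiftZ j x) := rfl
        rw [hw, Finset.mul_sum]
    _ ≤ ∑ j ∈ I, (K * Ξ + if (n : ℤ) - m < j then Ξ else 0) := by
        refine Finset.sum_le_sum fun j hj => ?_
        rw [hI, Finset.mem_Ico] at hj
        split_ifs with hjn
        · have := hall j
          have : 0 ≤ K * Ξ := mul_nonneg hK0 hΞ0.le
          linarith [hall j]
        · rw [add_zero]
          exact hgood j hj.1 (by omega)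
    _ = (2 * n + 1) * (K * Ξ) + (I.filter (fun j => (n : ℤ) - m < j)).card * Ξ := by
        rw [Finset.sum_add_distrib, ← Finset.sum_filter, Finset.sum_const, Finset.sum_const,
          nsmul_eq_mul, nsmul_eq_mul]
        congr 2
        have hcard : (-(n : ℤ) + (2 * n + 1 : ℕ) - -(n : ℤ)).toNat = 2 * n + 1 := by omega
        rw [hI, Int.card_Ico, hcard]
        push_cast
        ring
    _ ≤ (2 * n + 1) * (K * Ξ) + m * Ξ := by
        have h1 : I.filter (fun j => (n : ℤ) - m < j) ⊆ Finset.Ico ((n : ℤ) - m + 1) (n + 1) := by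
          intro j hj
          rw [Finset.mem_filter, hI, Finset.mem_Ico] at hj
          rw [Finset.mem_Ico]
          push_cast at hj
          omega
        have h2 := Finset.card_le_card h1
        rw [Int.card_Ico] at h2
        have h3 : ((I.filter (fun j => (n : ℤ) - m < j)).card : ℝ) ≤ m := by
          exact_mod_cast h2.trans (by omega)
        gcongr
    _ = _ := by ring

theorem integral_cylInd {β : ℝ} (ν : Measure ↥(betaSigma β)) (m : ℕ) (u : List ℕ)
    (y : ℤ → ℕ) (hyu : ∀ i : ℕ, i < m → y (1 + (i : ℤ)) = u.getD i 0) :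
    ∫ x, cylInd m y x.val ∂ν = (ν (cylOne β m u)).toReal := by
  classical
  have hmeas : MeasurableSet (cylOne β m u) := by
    have : cylOne β m u = ⋂ i : ℕ, ⋂ (_ : i < m),
        {x : ↥(betaSigma β) | x.val (1 + (i : ℤ)) = u.getD i 0} := by
      ext x
      simp [cylOne]
    rw [this]
    refine MeasurableSet.iInter fun i => MeasurableSet.iInter fun _ => ?_
    have hm : Measurable (fun x : ↥(betaSigma β) => x.val (1 + (i : ℤ))) :=
      (measurable_pi_apply _).comp measurable_subtype_coe
    exact hm (measurableSet_singleton (u.getD i 0))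
  have : (fun x : ↥(betaSigma β) => cylInd m y x.val) =
      (cylOne β m u).indicator (fun _ => (1 : ℝ)) := by
    funext x
    rw [cylInd_eq, Set.indicator_apply]
    refine if_congr ?_ rfl rfl
    simp only [cylOne, Set.mem_ofPred_eq]
    exact forall_congr' fun i => forall_congr' fun hi => by rw [hyu i hi]
  rw [this]
  have h2 := integral_indicator_one (μ := ν) hmeas
  exact h2

/-- The bound on the occupation number, transported to `ν` by the tangent inequality for the
observable `t • cylInd m y`. -/
theorem nu_le {β : ℝ} (hβ : 1 < β) {R : ℕ} (hR : 1 ≤ R) (hcR : betaC β R ≠ 0)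
    {φ : (ℤ → ℕ) → ℝ} {d : ℤ → ℝ} (H : OscB β φ d)
    {E : ℕ → Finset (ℤ → ℕ)} (hE : ∀ n, IsEn β n (E n)) {P : ℝ}
    (hP : Tendsto (pressureSeq φ E) atTop (nhds P)) {ν : Measure ↥(betaSigma β)}
    (hν : IsEquilibrium β E φ ν) (m : ℕ) (u : List ℕ) {y : ℤ → ℕ} (hy : y ∈ betaSigma β)
    (hyu : ∀ i : ℕ, i < m → y (1 + (i : ℤ)) = u.getD i 0) :
    (ν (cylOne β m u)).toReal ≤ ((R + 2) * (R + 2) : ℕ) *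
      Real.exp (2 * (∑' q, d q) + 1 + 4 * bdry d m + (wsum φ 1 m y - m * P)) := by
  obtain ⟨L, hL, hLm⟩ := exists_pressure hβ H
  obtain rfl : P = L := tendsto_nhds_unique hP (pressureSeq_tendsto hE hL)
  obtain ⟨e, Hf⟩ := cylInd_osc β m y
  have he0 : 0 ≤ ∑' q, e q := tsum_nonneg Hf.1
  -- `t` is so small that the perturbation costs at most a factor `exp 1` in `one_point`
  set t : ℝ := ((∑' q, e q) * (m + 1) + 1)⁻¹ with ht
  have hden : 0 < (∑' q, e q) * (m + 1) + 1 := by positivity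
  have ht0 : 0 < t := inv_pos.2 hden
  have ht1 : t * ((∑' q, e q) * (m + 1)) ≤ 1 := by
    rw [ht, inv_mul_le_iff₀ hden]
    linarith
  set K : ℝ := ((R + 2) * (R + 2) : ℕ) *
      Real.exp (2 * (∑' q, d q) + 1 + 4 * bdry d m + (wsum φ 1 m y - m * P)) with hK
  have hKZ : ((R + 2) * (R + 2) : ℕ) * Real.exp (2 * (∑' q, d q) + 3 * bdry d m +
      t * ((∑' q, e q) * (m + 1)) + wsum φ 1 m y) ≤ K * Zw β φ 0 m := by
    rw [hK, mul_assoc]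
    refine mul_le_mul_of_nonneg_left ?_ (Nat.cast_nonneg _)
    have h1 : Real.exp (m * P - bdry d m) ≤ Zw β φ 0 m := by
      have h2 := mul_le_mul_of_nonneg_left (hLm m) (Real.exp_pos (-bdry d m)).le
      rw [← mul_assoc, ← Real.exp_add, ← Real.exp_add, neg_add_cancel, Real.exp_zero,
        one_mul] at h2
      rwa [sub_eq_neg_add]
    refine le_trans ?_ (mul_le_mul_of_nonneg_left h1 (Real.exp_pos _).le)
    rw [← Real.exp_add]
    refine Real.exp_le_exp.2 ?_
    linarith
  obtain ⟨L', hL', -⟩ := exists_pressure hβ (H.add_smul Hf ht0.le)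
  have hψ := pressureSeq_tendsto hE hL'
  have htan := hν.2.2 (fun z => t * cylInd m y z)
    (continuous_const.mul (cylInd_continuous m y)).continuousOn
  rw [pressureLim, pressureLim, hP.limUnder_eq, hψ.limUnder_eq, integral_const_mul,
    integral_cylInd ν m u y hyu] at htan
  have hstep : ∀ n : ℕ, pressureSeq (fun z => φ z + t * cylInd m y z) E n - pressureSeq φ E n ≤
      t * K + t * m / ((2 * n + 1 : ℕ) : ℝ) := by
    intro n
    have h1 := occupation hβ hR hcR H hy Hf ht0.le hKZ n
    have h2 := log_sum_le (EW β (-(n : ℤ)) (2 * n + 1)) ⟨_, zero_mem_EW hβ _ _⟩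
      (wsum φ (-(n : ℤ)) (2 * n + 1)) (fun x => t * wsum (cylInd m y) (-(n : ℤ)) (2 * n + 1) x)
      (t * ((2 * n + 1) * K + m)) (by
        have h3 := mul_le_mul_of_nonneg_left h1 ht0.le
        unfold Zw at h3
        simp only [wsum_add_smul] at h3
        rw [Finset.mul_sum, ← mul_assoc] at h3
        refine le_trans (le_of_eq ?_) h3
        exact Finset.sum_congr rfl fun x _ => by ring)
    simp only [pressureSeq, XiAll_eq_Zw (hE n)]
    rw [← mul_sub]
    unfold Zw
    simp only [wsum_add_smul]
    have hn : (0 : ℝ) < 2 * n + 1 := by positivity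
    have h4 := mul_le_mul_of_nonneg_left h2 (inv_pos.2 hn).le
    refine h4.trans (le_of_eq ?_)
    push_cast
    field_simp
  have hlim : Tendsto (fun n : ℕ => t * K + t * m / ((2 * n + 1 : ℕ) : ℝ)) atTop
      (nhds (t * K + 0)) := by
    have h1 : Tendsto (fun n : ℕ => 2 * n + 1) atTop atTop :=
      tendsto_atTop_mono (fun n => by simp only [id]; omega) tendsto_id
    exact tendsto_const_nhds.add ((tendsto_const_div_atTop_nhds_zero_nat (t * m)).comp h1)
  have hfin := le_of_tendsto_of_tendsto' (hψ.sub hP) hlim hstep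
  refine le_of_mul_le_mul_left ?_ ht0
  linarith

/-- Lemma 6, upper bound: for an equilibrium measure `ν` of a function `φ` of
bounded total oscillations, `ν([ū]) ≤ K⁺ exp(∑_{j=1}^m φ(T^j y) − m p(φ))` with
`K⁺ = (z^β(c_1)+2) e^{3‖φ‖_δ} e^{5mε}`. -/
theorem stmt9 (β : ℝ) (hβ : 1 < β) (hβℕ : ∀ N : ℕ, (N : ℝ) ≠ β)
    (φ : (ℤ → ℕ) → ℝ) (hφc : ContinuousOn φ (betaSigma β)) (hφδ : normDelta β φ ≠ ⊤)
    (E : ℕ → Finset (ℤ → ℕ)) (hE : ∀ n, IsEn β n (E n))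
    (P : ℝ) (hP : Tendsto (pressureSeq φ E) atTop (nhds P))
    (ν : Measure ↥(betaSigma β)) (hν : IsEquilibrium β E φ ν) :
    ∀ ε : ℝ, 0 < ε → ∃ N : ℕ, ∀ m : ℕ, N ≤ m →
      ∀ u ∈ betaLang β, u.length = m →
        ∀ y ∈ betaSigma β, (∀ i : ℕ, i < m → y (1 + (i : ℤ)) = u.getD i 0) →
          (ν (cylOne β m u)).toReal ≤
            ((zPref β [betaC β 0] : ℝ) + 2) * Real.exp (3 * (normDelta β φ).toReal) *
              Real.exp (5 * (m : ℝ) * ε) *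
              Real.exp ((∑ j ∈ Finset.Icc (1 : ℤ) (m : ℤ), φ (shiftZ j y)) - (m : ℝ) * P) := by
  intro ε hε
  obtain ⟨R, hR, hcR⟩ := exists_betaC_pos β hβ
  obtain ⟨d, H⟩ := normDelta_osc hφδ
  have h1 : ∀ᶠ m : ℕ in atTop, bdry d m / m < ε := H.bdry_tendsto.eventually_lt_const hε
  set c : ℝ := Real.log ((R + 2) * (R + 2) : ℕ) + 2 * (∑' q, d q) + 1 with hc
  have h2 : ∀ᶠ m : ℕ in atTop, c / m < ε :=
    (tendsto_const_div_atTop_nhds_zero_nat c).eventually_lt_const hε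
  obtain ⟨N, hN⟩ := eventually_atTop.1 (h1.and (h2.and (eventually_gt_atTop 0)))
  refine ⟨N, fun m hm u _ _ y hy hyu => ?_⟩
  obtain ⟨a1, a2, a3⟩ := hN m hm
  have hm0 : (0 : ℝ) < m := by exact_mod_cast a3
  rw [div_lt_iff₀ hm0] at a1 a2
  refine (nu_le hβ hR hcR H hE hP hν m u hy hyu).trans ?_
  have hw : wsum φ 1 m y = ∑ j ∈ Finset.Icc (1 : ℤ) (m : ℤ), φ (shiftZ j y) := by
    unfold wsum
    congr 1
    ext j
    rw [Finset.mem_Icc, Finset.mem_Ico]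
    omega
  rw [hw]
  set S := (∑ j ∈ Finset.Icc (1 : ℤ) (m : ℤ), φ (shiftZ j y)) - (m : ℝ) * P with hS
  have hpos : (0 : ℝ) < ((R + 2) * (R + 2) : ℕ) := by positivity
  have hpre : (1 : ℝ) ≤ ((zPref β [betaC β 0] : ℝ) + 2) *
      Real.exp (3 * (normDelta β φ).toReal) := by
    have b1 : (1 : ℝ) ≤ (zPref β [betaC β 0] : ℝ) + 2 := by
      have : (0 : ℝ) ≤ (zPref β [betaC β 0] : ℝ) := Nat.cast_nonneg _
      linarith
    exact one_le_mul_of_one_le_of_one_le b1 (Real.one_le_exp (by positivity))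
  calc ((R + 2) * (R + 2) : ℕ) * Real.exp (2 * (∑' q, d q) + 1 + 4 * bdry d m + S)
      = Real.exp (c + 4 * bdry d m + S) := by
        have hexp : (((R + 2) * (R + 2) : ℕ) : ℝ) =
            Real.exp (Real.log ((R + 2) * (R + 2) : ℕ)) := (Real.exp_log hpos).symm
        conv_lhs => rw [hexp, ← Real.exp_add]
        congr 1
        rw [hc]
        ring
    _ ≤ Real.exp (5 * (m : ℝ) * ε) * Real.exp S := by
        rw [← Real.exp_add]
        refine Real.exp_le_exp.2 ?_
        linarith
    _ ≤ _ := by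
        rw [mul_assoc (_ * _)]
        exact le_mul_of_one_le_left (by positivity) hpre

end
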